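/- arXiv:1602.01630 — 2 statements merged into one kernel-verified Lean document; each statement's English description precedes it below -/
import Mathlib

section
/- Let n ≥ 2, let 0 < δ₀ < 1, and let Q > Q₀(n, δ₀) be a sufficiently large integer. Suppose x₀ ∈ [-1/2, 1/2] is such that every nonzero polynomial P ∈ ℤ[t] with deg P ≤ n - 1 and H(P) ≤ Q satisfying |P(x₀)| < Q^{-n+1} also satisfies |P'(x₀)| ≥ δ₀·Q. Then there exists a monic polynomial P ∈ ℤ[t] of degree n, irreducible over ℚ, such that: (i) n!·δ₀^{-(n-1)}·Q^{-n+1} ≤ |P(x₀)| ≤ 2·n!·(2n+1)·δ₀^{-(n-1)}·Q^{-n+1}; (ii) |P'(x₀)| ≥ n!·Q; (iii) H(P) ≤ 6·(n+1)!·δ₀^{-(n-1)}·Q; and (iv) P has a real root α with |x₀ - α| ≤ n·(2n+1)·δ₀^{-(n-1)}·Q^{-n}. -/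
open Polynomial

/-!
Integer polynomials `R` of degree less than `n` form a lattice, measured by `R(x₀)` and the
nonconstant coefficients. If those are all small, so is `R'(x₀)`; hence genericity of `x₀` says
that a suitably scaled lattice has no short vectors. A packing argument then shows that every real
polynomial is approximated by a lattice point with error at most the covolume. Approximating a
linear real polynomial, one prescribes, up to a controlled error, the value and the derivative
at `x₀` of `P = X ^ n + 2 + 4 R`, which is irreducible by Eisenstein's criterion. Since `P(x₀)` is
small and `P'` stays large near `x₀`, there is a real root close to `x₀`.
-/

open MeasureTheory
open scoped Matrix Nat

section Covering

variable {E : Type*} [NormedAddCommGroup E] [MeasurableSpace E] [BorelSpace E]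
  {μ : Measure E} [μ.IsAddHaarMeasure] {L : AddSubgroup E} [Countable L] {F : Set E} {r : ℝ}

theorem card_mul_measure_ball_le_of_pairwise_le_norm_sub (hF : IsAddFundamentalDomain L F μ)
    (hL : ∀ v ∈ L, v ≠ 0 → r ≤ ‖v‖) {κ : Type*} [Fintype κ] {u : κ → E}
    (hu : Pairwise fun i j => r ≤ ‖(u i : E ⧸ L) - u j‖) :
    Fintype.card κ * μ (Metric.ball 0 (r / 2)) ≤ μ F := by
  have hdisj : Pairwise (Function.onFun Disjoint fun i => Metric.ball (u i) (r / 2)) := by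
    intro i j hij
    refine Metric.ball_disjoint_ball ?_
    rw [add_halves, dist_eq_norm]
    exact (hu hij).trans (QuotientAddGroup.norm_mk_le_norm (m := u i - u j))
  have hvol : μ (⋃ i, Metric.ball (u i) (r / 2)) = Fintype.card κ * μ (Metric.ball 0 (r / 2)) := by
    rw [measure_iUnion hdisj fun _ => measurableSet_ball]
    simp [Measure.addHaar_ball_center]
  by_contra! hlt
  obtain ⟨x, hx, y, hy, g, hg, hgx⟩ := hF.exists_ne_zero_vadd_eq
    (MeasurableSet.iUnion fun i => measurableSet_ball (x := u i) (ε := r / 2)).nullMeasurableSet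
    (hvol ▸ hlt)
  obtain ⟨i, hi⟩ := Set.mem_iUnion.mp hx
  obtain ⟨j, hj⟩ := Set.mem_iUnion.mp hy
  rw [mem_ball_iff_norm'] at hi
  rw [mem_ball_iff_norm] at hj
  have hgxy : (g : E) = y - x := eq_sub_of_add_eq hgx
  rcases eq_or_ne i j with rfl | hij
  · have hsmall : ‖(y - u i) + (u i - x)‖ < r := (norm_add_le _ _).trans_lt (by linarith)
    rw [sub_add_sub_cancel, ← hgxy] at hsmall
    exact hsmall.not_ge (hL g g.2 (by simpa using hg))
  · have hxy : (x : E ⧸ L) = y := QuotientAddGroup.eq.mpr (by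
      rw [neg_add_eq_sub, ← hgxy]
      exact g.2)
    have hix : ‖(u i : E ⧸ L) - x‖ ≤ ‖u i - x‖ := QuotientAddGroup.norm_mk_le_norm (m := u i - x)
    have hyj : ‖(y : E ⧸ L) - u j‖ ≤ ‖y - u j‖ := QuotientAddGroup.norm_mk_le_norm (m := y - u j)
    have htri := norm_sub_le_norm_sub_add_norm_sub (u i : E ⧸ L) x (u j)
    rw [hxy] at hix htri
    linarith [hu hij]

theorem norm_lt_of_measure_fundamentalDomain_lt [NormedSpace ℝ E]
    (hF : IsAddFundamentalDomain L F μ) (hL : ∀ v ∈ L, v ≠ 0 → r ≤ ‖v‖) {k : ℕ}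
    (hk : μ F < (k + 1) * μ (Metric.ball 0 (r / 2))) (y : E ⧸ L) : ‖y‖ < k * r := by
  have hr : 0 ≤ r := by
    by_contra! hr
    simp [Metric.ball_eq_empty.mpr (show r / 2 ≤ 0 by linarith)] at hk
  by_contra! hy
  -- Points `t • y` at distances `0, r, …, k r` from `L` are too many for the packing bound.
  obtain ⟨y, rfl⟩ := QuotientAddGroup.mk_surjective y
  have hcont : Continuous fun t : ℝ => ‖((t • y : E) : E ⧸ L)‖ :=
    continuous_norm.comp (continuous_quotient_mk'.comp (by fun_prop))
  have hpts (i : Fin (k + 1)) : ∃ u : E, ‖(u : E ⧸ L)‖ = i * r := by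
    have hi : (i : ℝ) ≤ k := by exact_mod_cast i.is_le
    obtain ⟨t, -, ht⟩ := intermediate_value_Icc zero_le_one hcont.continuousOn
      (show (i : ℝ) * r ∈ Set.Icc _ _ by
        simp only [zero_smul, one_smul, QuotientAddGroup.mk_zero, norm_zero]
        exact ⟨by positivity, hy.trans' (by gcongr)⟩)
    exact ⟨t • y, ht⟩
  choose u hu using hpts
  have hsep : Pairwise fun i j => r ≤ ‖(u i : E ⧸ L) - u j‖ := by
    intro i j hij
    have hne : (i : ℤ) - j ≠ 0 := sub_ne_zero.mpr (by simpa [Fin.ext_iff] using hij)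
    have hone : (1 : ℝ) ≤ |((i : ℤ) - j : ℤ)| := by exact_mod_cast Int.one_le_abs hne
    push_cast at hone
    calc r ≤ |(i : ℝ) - j| * r := le_mul_of_one_le_left hr hone
      _ = |‖(u i : E ⧸ L)‖ - ‖(u j : E ⧸ L)‖| := by
        rw [hu, hu, ← sub_mul, abs_mul, abs_of_nonneg hr]
      _ ≤ _ := abs_norm_sub_norm_le _ _
  have hpack := card_mul_measure_ball_le_of_pairwise_le_norm_sub hF hL hsep
  rw [Fintype.card_fin, Nat.cast_add_one] at hpack
  exact hpack.not_gt hk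

end Covering

theorem exists_int_vecMul_norm_sub_lt_abs_det {ι : Type*} [Fintype ι] [DecidableEq ι]
    {A : Matrix ι ι ℝ} (hA : A.det ≠ 0)
    (hmin : ∀ m : ι → ℤ, m ≠ 0 → 1 ≤ ‖(fun i => (m i : ℝ)) ᵥ* A‖) (y : ι → ℝ) :
    ∃ m : ι → ℤ, ‖y - ((fun i => (m i : ℝ)) ᵥ* A)‖ < |A.det| := by
  have hli : LinearIndependent ℝ A.row := Matrix.linearIndependent_rows_of_det_ne_zero hA
  let b : Module.Basis ι ℝ (ι → ℝ) := Module.Basis.mk hli (by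
    rw [hli.span_eq_top_of_card_eq_finrank' (by simp)])
  have hb : ⇑b = A.row := Module.Basis.coe_mk _ _
  have hmem (v : ι → ℝ) : v ∈ (Submodule.span ℤ (Set.range b)).toAddSubgroup ↔
      ∃ m : ι → ℤ, (fun i => (m i : ℝ)) ᵥ* A = v := by
    simp only [Submodule.mem_toAddSubgroup, Submodule.mem_span_range_iff_exists_fun, hb,
      Matrix.vecMul_eq_sum, Matrix.row_def, Int.cast_smul_eq_zsmul]
  have hvol : volume (ZSpan.fundamentalDomain b) <
      (⌊|A.det|⌋₊ + 1) * volume (Metric.ball (0 : ι → ℝ) (1 / 2)) := by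
    have hball : volume (Metric.ball (0 : ι → ℝ) (1 / 2)) = 1 := by
      simp [Real.volume_pi_ball]
    have hdet : Matrix.of b = A := hb
    rw [ZSpan.volume_fundamentalDomain, hball, mul_one, hdet, ← Nat.cast_add_one,
      ENNReal.ofReal_lt_natCast (Nat.succ_ne_zero _)]
    exact_mod_cast Nat.lt_floor_add_one |A.det|
  have : Countable (Submodule.span ℤ (Set.range b)).toAddSubgroup :=
    inferInstanceAs (Countable (Submodule.span ℤ (Set.range b)))
  have hlong : ∀ v ∈ (Submodule.span ℤ (Set.range b)).toAddSubgroup, v ≠ 0 → 1 ≤ ‖v‖ := by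
    intro v hv hv0
    obtain ⟨m, rfl⟩ := (hmem v).mp hv
    refine hmin m ?_
    rintro rfl
    refine hv0 ?_
    simp only [Pi.zero_apply, Int.cast_zero]
    exact Matrix.zero_vecMul A
  have hcover := norm_lt_of_measure_fundamentalDomain_lt
    (ZSpan.isAddFundamentalDomain' b volume) hlong hvol y
  obtain ⟨w, hwy, hw⟩ := QuotientAddGroup.norm_lt_iff.mp hcover
  obtain ⟨m, hm⟩ := (hmem (y - w)).mp (by
    rw [← neg_add_eq_sub]
    exact QuotientAddGroup.eq.mp hwy)
  refine ⟨m, ?_⟩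
  rw [hm, sub_sub_cancel]
  exact hw.trans_le (by simpa using Nat.floor_le (abs_nonneg A.det))

/-- The matrix of the linear coordinates `(P(x) / ε, p₁ / ρ, …, p_N / ρ)` of a polynomial
`P = p₀ + p₁ t + ⋯ + p_N t ^ N`, acting on row vectors of coefficients. Its rows span the lattice
in which integer polynomials are compared by their value at `x` and their higher coefficients. -/
noncomputable def valueCoeffMatrix (N : ℕ) (x ε ρ : ℝ) : Matrix (Fin (N + 1)) (Fin (N + 1)) ℝ :=
  Matrix.of fun i j => if j = 0 then x ^ (i : ℕ) / ε else if i = j then 1 / ρ else 0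

theorem det_valueCoeffMatrix (N : ℕ) (x ε ρ : ℝ) :
    (valueCoeffMatrix N x ε ρ).det = (ε * ρ ^ N)⁻¹ := by
  rw [Matrix.det_of_isLowerTriangular, Fin.prod_univ_succ]
  · simp [valueCoeffMatrix, mul_comm]
  · intro i j hij
    have hij : i < j := hij
    simp [valueCoeffMatrix, hij.ne, (Fin.zero_le i).trans_lt hij |>.ne']

theorem norm_toFn_vecMul_valueCoeffMatrix_lt_iff {N : ℕ} {x ε ρ c : ℝ} (hε : 0 < ε) (hρ : 0 < ρ)
    (hc : 0 < c) {P : ℝ[X]} (hP : P.natDegree ≤ N) :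
    ‖toFn (N + 1) P ᵥ* valueCoeffMatrix N x ε ρ‖ < c ↔
      |P.eval x| < ε * c ∧ ∀ j ≠ 0, |P.coeff j| < ρ * c := by
  have hvalue : (toFn (N + 1) P ᵥ* valueCoeffMatrix N x ε ρ) 0 = P.eval x / ε := by
    simp [eval_eq_sum_range' (Nat.lt_succ_of_le hP), Finset.sum_range, Matrix.vecMul, dotProduct,
      valueCoeffMatrix, toFn, Finset.sum_div, mul_div_assoc]
  have hcoeff (j : Fin N) :
      (toFn (N + 1) P ᵥ* valueCoeffMatrix N x ε ρ) j.succ = P.coeff (j + 1) / ρ := by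
    simp [Matrix.vecMul, dotProduct, valueCoeffMatrix, toFn, div_eq_mul_inv]
  rw [pi_norm_lt_iff hc, Fin.forall_fin_succ]
  simp only [hvalue, hcoeff, Real.norm_eq_abs, abs_div, abs_of_pos hε, abs_of_pos hρ,
    div_lt_iff₀' hε, div_lt_iff₀' hρ]
  refine and_congr_right fun _ => ⟨fun h j hj => ?_, fun h j => h _ (Nat.succ_ne_zero _)⟩
  obtain ⟨k, rfl⟩ := Nat.exists_eq_succ_of_ne_zero hj
  rcases lt_or_ge k N with hk | hk
  · exact h ⟨k, hk⟩
  · rw [coeff_eq_zero_of_natDegree_lt (by omega), abs_zero]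
    positivity

theorem exists_int_polynomial_approx {N : ℕ} {x ε ρ : ℝ} (hε : 0 < ε) (hρ : 0 < ρ)
    (hmin : ∀ R : ℤ[X], R.natDegree ≤ N → |aeval x R| < ε →
      (∀ j ≠ 0, |(R.coeff j : ℝ)| < ρ) → R = 0)
    {T : ℝ[X]} (hT : T.natDegree ≤ N) :
    ∃ R : ℤ[X], R.natDegree ≤ N ∧ |aeval x R - T.eval x| < ε * (ε * ρ ^ N)⁻¹ ∧
      ∀ j ≠ 0, |R.coeff j - T.coeff j| < ρ * (ε * ρ ^ N)⁻¹ := by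
  have hdet := det_valueCoeffMatrix N x ε ρ
  have hdet0 : 0 < (ε * ρ ^ N)⁻¹ := by positivity
  have hdeg (m : Fin (N + 1) → ℤ) : (ofFn (N + 1) m).natDegree ≤ N :=
    Nat.lt_succ_iff.mp (ofFn_natDegree_lt (Nat.succ_pos N) m)
  have hcast (m : Fin (N + 1) → ℤ) :
      (fun i => (m i : ℝ)) = toFn (N + 1) ((ofFn (N + 1) m).map (algebraMap ℤ ℝ)) := by
    ext i
    simp [toFn, ofFn_coeff_eq_val_of_lt _ i.is_lt]
  obtain ⟨m, hm⟩ := exists_int_vecMul_norm_sub_lt_abs_det (hdet ▸ hdet0.ne') (fun m hm0 => by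
    by_contra! hlt
    rw [hcast, norm_toFn_vecMul_valueCoeffMatrix_lt_iff hε hρ one_pos
      (natDegree_map_le.trans (hdeg m))] at hlt
    simp only [eval_map_algebraMap, coeff_map, eq_intCast, mul_one] at hlt
    refine hm0 (injective_ofFn (N + 1) ?_)
    rw [map_zero]
    exact hmin _ (hdeg m) hlt.1 hlt.2) (toFn (N + 1) T ᵥ* valueCoeffMatrix N x ε ρ)
  rw [hcast, ← Matrix.sub_vecMul, ← map_sub, hdet, abs_of_pos hdet0,
    norm_toFn_vecMul_valueCoeffMatrix_lt_iff hε hρ hdet0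
      ((natDegree_sub_le_iff_left (natDegree_map_le.trans (hdeg m))).mpr hT)] at hm
  simp only [eval_sub, eval_map_algebraMap, coeff_sub, coeff_map, eq_intCast] at hm
  refine ⟨ofFn (N + 1) m, hdeg m, ?_, fun j hj => ?_⟩
  · rw [abs_sub_comm]
    exact hm.1
  · rw [abs_sub_comm]
    exact hm.2 j hj

section Bounds

variable {P : ℝ[X]} {x : ℝ}

theorem abs_eval_le_sum_abs_coeff_mul_pow {n : ℕ} {r : ℝ} (hP : P.natDegree < n) (hx : |x| ≤ r) :
    |P.eval x| ≤ ∑ i ∈ Finset.range n, |P.coeff i| * r ^ i := by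
  rw [eval_eq_sum_range' hP]
  refine (Finset.abs_sum_le_sum_abs _ _).trans (Finset.sum_le_sum fun i _ => ?_)
  rw [abs_mul, abs_pow]
  gcongr

theorem abs_coeff_le_abs_eval_add {ρ : ℝ} (hx : |x| ≤ 1 / 2) (hP : ∀ j ≠ 0, |P.coeff j| ≤ ρ)
    (j : ℕ) : |P.coeff j| ≤ |P.eval x| + ρ := by
  rcases eq_or_ne j 0 with rfl | hj
  · have hdivX : |P.divX.eval x| ≤ 2 * ρ := by
      calc |P.divX.eval x|
          ≤ ∑ i ∈ Finset.range (P.divX.natDegree + 1), |P.divX.coeff i| * (1 / 2) ^ i :=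
            abs_eval_le_sum_abs_coeff_mul_pow (Nat.lt_succ_self _) hx
        _ ≤ ∑ i ∈ Finset.range (P.divX.natDegree + 1), ρ * (1 / 2) ^ i := by
            gcongr with i
            rw [coeff_divX]
            exact hP _ (Nat.succ_ne_zero i)
        _ = (∑ i ∈ Finset.range (P.divX.natDegree + 1), (1 / 2) ^ i) * ρ := by
            rw [← Finset.mul_sum, mul_comm]
        _ ≤ 2 * ρ := by
            gcongr
            · exact (abs_nonneg _).trans (hP 1 one_ne_zero)
            · exact sum_geometric_two_le _
    have hsplit : P.coeff 0 = P.eval x - x * P.divX.eval x := by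
      have heval := congrArg (eval x) (X_mul_divX_add P)
      simp only [eval_add, eval_mul, eval_X, eval_C] at heval
      linarith
    have htail : |x * P.divX.eval x| ≤ 1 / 2 * (2 * ρ) := by
      rw [abs_mul]
      gcongr
    rw [hsplit]
    linarith [abs_sub (P.eval x) (x * P.divX.eval x)]
  · exact (hP j hj).trans (le_add_of_nonneg_left (abs_nonneg _))

/-- The sum `∑ j / 2 ^ (j - 1)` over `1 ≤ j ≤ N`: the largest possible derivative on
`[-1/2, 1/2]` of a polynomial of degree at most `N` whose nonconstant coefficients have absolute
value at most `1`. -/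
noncomputable def derivativeWeight (N : ℕ) : ℝ :=
  ∑ i ∈ Finset.range N, (i + 1) * (1 / 2) ^ i

theorem abs_eval_derivative_lt {N : ℕ} {ρ : ℝ} (hN : 0 < N) (hdeg : P.natDegree ≤ N)
    (hx : |x| ≤ 1 / 2) (hP : ∀ j ≠ 0, |P.coeff j| < ρ) :
    |P.derivative.eval x| < ρ * derivativeWeight N := by
  have hdeg' : P.derivative.natDegree < N := by
    have := natDegree_derivative_le P
    omega
  calc |P.derivative.eval x|
      ≤ ∑ i ∈ Finset.range N, |P.derivative.coeff i| * (1 / 2) ^ i :=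
        abs_eval_le_sum_abs_coeff_mul_pow hdeg' hx
    _ < ∑ i ∈ Finset.range N, ρ * ((i + 1) * (1 / 2) ^ i) := by
        refine Finset.sum_lt_sum_of_nonempty (Finset.nonempty_range_iff.mpr hN.ne') fun i _ => ?_
        rw [coeff_derivative, abs_mul, abs_of_nonneg (by positivity : (0 : ℝ) ≤ i + 1), mul_assoc]
        gcongr
        exact hP _ (Nat.succ_ne_zero i)
    _ = ρ * derivativeWeight N := by rw [derivativeWeight, Finset.mul_sum]

theorem abs_coeff_derivative_le {n : ℕ} {H : ℝ} (hdeg : P.natDegree ≤ n)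
    (hP : ∀ j, |P.coeff j| ≤ H) (j : ℕ) : |P.derivative.coeff j| ≤ H * n := by
  have hH : 0 ≤ H := (abs_nonneg _).trans (hP 0)
  rw [coeff_derivative, abs_mul, abs_of_nonneg (by positivity : (0 : ℝ) ≤ j + 1)]
  rcases lt_or_ge j n with hj | hj
  · gcongr
    · exact hP _
    · exact_mod_cast hj
  · rw [coeff_eq_zero_of_natDegree_lt (by omega), abs_zero, zero_mul]
    positivity

theorem abs_eval_derivative_derivative_le {n : ℕ} {H : ℝ} (hdeg : P.natDegree ≤ n)
    (hP : ∀ j, |P.coeff j| ≤ H) (hx : |x| ≤ 1) :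
    |P.derivative.derivative.eval x| ≤ (n + 1) * n ^ 2 * H := by
  have hdeg₁ : P.derivative.natDegree ≤ n := (natDegree_derivative_le P).trans (by omega)
  have hdeg₂ : P.derivative.derivative.natDegree < n + 1 := by
    have := natDegree_derivative_le P.derivative
    omega
  calc |P.derivative.derivative.eval x|
      ≤ ∑ i ∈ Finset.range (n + 1), |P.derivative.derivative.coeff i| * 1 ^ i :=
        abs_eval_le_sum_abs_coeff_mul_pow hdeg₂ hx
    _ ≤ ∑ i ∈ Finset.range (n + 1), H * n * n * 1 ^ i := by
        gcongr with i
        exact abs_coeff_derivative_le hdeg₁ (abs_coeff_derivative_le hdeg hP) i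
    _ = (n + 1) * n ^ 2 * H := by
        simp only [one_pow, mul_one, Finset.sum_const, Finset.card_range, nsmul_eq_mul]
        push_cast
        ring

end Bounds

theorem derivativeWeight_eq (N : ℕ) : derivativeWeight N = 4 - (2 * N + 4) * (1 / 2) ^ N := by
  induction N with
  | zero => norm_num [derivativeWeight]
  | succ k ih =>
    rw [derivativeWeight, Finset.sum_range_succ, ← derivativeWeight, ih]
    push_cast
    ring

theorem one_le_derivativeWeight {N : ℕ} (hN : 0 < N) : 1 ≤ derivativeWeight N := by
  have h := Finset.single_le_sum (f := fun i : ℕ => ((i : ℝ) + 1) * (1 / 2) ^ i)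
    (fun i _ => by positivity) (Finset.mem_range.mpr hN)
  simpa [derivativeWeight] using h

theorem eight_mul_four_pow_le_factorial_mul {N : ℕ} (hN : 4 ≤ N) :
    8 * 4 ^ N ≤ (N + 1)! * (4 * N + 5) := by
  induction N, hN using Nat.le_induction with
  | base => decide
  | succ k hk ih =>
    calc 8 * 4 ^ (k + 1) = 4 * (8 * 4 ^ k) := by ring
      _ ≤ (k + 2) * ((k + 1)! * (4 * k + 5)) := Nat.mul_le_mul (by omega) ih
      _ ≤ (k + 1 + 1)! * (4 * (k + 1) + 5) := by
          rw [Nat.factorial_succ (k + 1), mul_assoc]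
          gcongr
          omega

theorem eight_mul_derivativeWeight_pow_le_factorial_mul {N : ℕ} (hN : 0 < N) :
    8 * derivativeWeight N ^ N ≤ (N + 1)! * (4 * N + 5) := by
  rcases lt_or_ge N 4 with h | h
  · rw [derivativeWeight_eq]
    interval_cases N <;> norm_num [Nat.factorial]
  · have hW0 : 0 ≤ derivativeWeight N := zero_le_one.trans (one_le_derivativeWeight hN)
    have hW4 : derivativeWeight N ≤ 4 := by
      rw [derivativeWeight_eq, sub_le_self_iff]
      positivity
    calc 8 * derivativeWeight N ^ N ≤ 8 * 4 ^ N := by gcongr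
      _ ≤ (N + 1)! * (4 * N + 5) := by exact_mod_cast eight_mul_four_pow_le_factorial_mul h

theorem four_mul_derivativeWeight_div_pow_le {N : ℕ} {δ : ℝ} (hN : 0 < N) (hδ : 0 < δ) :
    4 * (derivativeWeight N / δ) ^ N ≤ (N + 1)! * (4 * N + 5) / 2 * (δ ^ N)⁻¹ := by
  rw [div_pow, div_eq_mul_inv, ← mul_assoc]
  gcongr
  linarith [eight_mul_derivativeWeight_pow_le_factorial_mul hN]

theorem exists_root_of_le_deriv {f : ℝ → ℝ} (hf : Differentiable ℝ f) {x₀ η K : ℝ} (hη : 0 ≤ η)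
    (hK : ∀ x ∈ Set.Icc (x₀ - η) x₀, K ≤ deriv f x) (h₀ : 0 ≤ f x₀) (h₁ : f x₀ ≤ K * η) :
    ∃ α ∈ Set.Icc (x₀ - η) x₀, f α = 0 := by
  have hle : x₀ - η ≤ x₀ := sub_le_self _ hη
  have hmean := (convex_Icc (x₀ - η) x₀).mul_sub_le_image_sub_of_le_deriv
    hf.continuous.continuousOn hf.differentiableOn (fun x hx => hK x (interior_subset hx))
    _ (Set.left_mem_Icc.mpr hle) _ (Set.right_mem_Icc.mpr hle) hle
  rw [sub_sub_cancel] at hmean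
  exact intermediate_value_Icc hle hf.continuous.continuousOn ⟨by linarith, h₀⟩

theorem exists_root_near {n : ℕ} {P : ℝ[X]} {H x₀ η K : ℝ} (hdeg : P.natDegree ≤ n)
    (hP : ∀ j, |P.coeff j| ≤ H) (hx : |x₀| ≤ 1 / 2) (hη : 0 ≤ η) (hη' : η ≤ 1 / 2)
    (hHK : (n + 1) * n ^ 2 * H * η ≤ K) (hK : 2 * K ≤ P.derivative.eval x₀)
    (h₀ : 0 ≤ P.eval x₀) (h₁ : P.eval x₀ ≤ K * η) :
    ∃ α, P.eval α = 0 ∧ |x₀ - α| ≤ η := by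
  have hH : 0 ≤ H := (abs_nonneg _).trans (hP 0)
  have hunit : ∀ x ∈ Set.Icc (x₀ - η) x₀, |x| ≤ 1 := fun x hx' => by
    rw [abs_le] at hx ⊢
    exact ⟨by linarith [hx'.1], by linarith [hx'.2]⟩
  have hdist : ∀ x ∈ Set.Icc (x₀ - η) x₀, |x₀ - x| ≤ η := fun x hx' => by
    rw [abs_of_nonneg (sub_nonneg.mpr hx'.2)]
    linarith [hx'.1]
  have hderiv : ∀ x ∈ Set.Icc (x₀ - η) x₀, K ≤ deriv (fun x => P.eval x) x := by
    intro x hx'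
    rw [Polynomial.deriv]
    have hvar := (convex_Icc (x₀ - η) x₀).norm_image_sub_le_of_norm_hasDerivWithin_le
      (fun z _ => (P.derivative.hasDerivAt z).hasDerivWithinAt)
      (fun z hz => abs_eval_derivative_derivative_le hdeg hP (hunit z hz))
      hx' (Set.right_mem_Icc.mpr (sub_le_self _ hη))
    rw [Real.norm_eq_abs, Real.norm_eq_abs] at hvar
    have hsmall : (n + 1) * n ^ 2 * H * |x₀ - x| ≤ K := hHK.trans' (by
      gcongr
      exact hdist x hx')
    linarith [le_abs_self (P.derivative.eval x₀ - P.derivative.eval x)]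
  obtain ⟨α, hα, hα₀⟩ := exists_root_of_le_deriv P.differentiable hη hderiv h₀ h₁
  exact ⟨α, hα₀, hdist α hα⟩

theorem degree_X_pow_add_eq {R : Type*} [Semiring R] [Nontrivial R] {n : ℕ} {f : R[X]}
    (hf : f.degree < n) : (X ^ n + f).degree = (n : WithBot ℕ) := by
  rw [degree_add_eq_left_of_degree_lt (by rwa [degree_X_pow]), degree_X_pow]

theorem degree_C_mul_lt_of_natDegree_lt {R : Type*} [Semiring R] {n : ℕ} {f : R[X]}
    (hf : f.natDegree < n) (a : R) : (C a * f).degree < n :=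
  degree_le_natDegree.trans_lt (by exact_mod_cast (natDegree_C_mul_le a f).trans_lt hf)

theorem natDegree_one_add_C_mul_lt {A : Type*} [Semiring A] {n : ℕ} {f : A[X]}
    (hf : f.natDegree < n) (a : A) : (1 + C a * f).natDegree < n :=
  (natDegree_add_le _ _).trans_lt (max_lt (by simpa using (Nat.zero_le _).trans_lt hf)
    ((natDegree_C_mul_le _ _).trans_lt hf))

theorem irreducible_X_pow_add_C_mul {R : Type*} [CommRing R] [IsDomain R] {p : R} (hp : Prime p)
    {n : ℕ} {f : R[X]} (hf : f.natDegree < n) (hpf : ¬ p ∣ f.coeff 0) :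
    Irreducible (X ^ n + C p * f) := by
  have hdeg := degree_C_mul_lt_of_natDegree_lt hf p
  have hmonic : (X ^ n + C p * f).Monic := monic_X_pow_add hdeg
  have hprime : (Ideal.span {p}).IsPrime := (Ideal.span_singleton_prime hp.ne_zero).mpr hp
  refine irreducible_of_eisenstein_criterion hprime ?_ (fun k hk => ?_) ?_ ?_ hmonic.isPrimitive
  · rw [hmonic.leadingCoeff]
    exact hprime.one_notMem
  · have hkn : k < n := by rwa [degree_X_pow_add_eq hdeg, Nat.cast_lt] at hk
    rw [Ideal.mem_span_singleton, coeff_add, coeff_X_pow, if_neg hkn.ne, zero_add, coeff_C_mul]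
    exact dvd_mul_right _ _
  · rw [degree_X_pow_add_eq hdeg]
    exact_mod_cast (Nat.zero_le _).trans_lt hf
  · have hn : 0 ≠ n := ((Nat.zero_le _).trans_lt hf).ne
    rw [Ideal.span_singleton_pow, Ideal.mem_span_singleton, coeff_add, coeff_X_pow, if_neg hn,
      zero_add, coeff_C_mul, sq, mul_dvd_mul_iff_left hp.ne_zero]
    exact hpf

/-- The polynomial `X ^ n + 2 + 4 R`, which is Eisenstein at `2` whatever the integer polynomial
`R` of degree less than `n`. It is bracketed as `X ^ n + 2 (1 + 2 R)` for Eisenstein's criterion. -/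
noncomputable def eisensteinShift (n : ℕ) (R : ℤ[X]) : ℤ[X] :=
  X ^ n + C 2 * (1 + C 2 * R)

section EisensteinShift

variable {n : ℕ} {R : ℤ[X]}

theorem monic_eisensteinShift (hR : R.natDegree < n) : (eisensteinShift n R).Monic :=
  monic_X_pow_add (degree_C_mul_lt_of_natDegree_lt (natDegree_one_add_C_mul_lt hR 2) 2)

theorem natDegree_eisensteinShift (hR : R.natDegree < n) : (eisensteinShift n R).natDegree = n :=
  natDegree_eq_of_degree_eq_some (degree_X_pow_add_eq
    (degree_C_mul_lt_of_natDegree_lt (natDegree_one_add_C_mul_lt hR 2) 2))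

theorem irreducible_map_eisensteinShift (hR : R.natDegree < n) :
    Irreducible ((eisensteinShift n R).map (algebraMap ℤ ℚ)) := by
  rw [← (monic_eisensteinShift hR).irreducible_iff_irreducible_map_fraction_map]
  refine irreducible_X_pow_add_C_mul Int.prime_two (natDegree_one_add_C_mul_lt hR 2) ?_
  rw [coeff_add, coeff_one_zero, coeff_C_mul]
  omega

variable (n R)

theorem aeval_eisensteinShift (x : ℝ) :
    aeval x (eisensteinShift n R) = x ^ n + 2 + 4 * aeval x R := by
  simp only [eisensteinShift, map_add, map_mul, map_pow, map_one, aeval_X, aeval_C,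
    algebraMap_int_eq, Int.coe_castRingHom, Int.cast_ofNat]
  ring

theorem aeval_derivative_eisensteinShift (x : ℝ) :
    aeval x (derivative (eisensteinShift n R)) =
      n * x ^ (n - 1) + 4 * aeval x (derivative R) := by
  simp only [eisensteinShift, derivative_X_pow, derivative_C_mul, derivative_one,
    map_add, map_mul, map_pow, map_natCast, map_zero, aeval_X, aeval_C, algebraMap_int_eq,
    Int.coe_castRingHom, Int.cast_ofNat]
  ring

theorem abs_coeff_eisensteinShift_le {j : ℕ} (hj : j ≠ 0) :
    |(eisensteinShift n R).coeff j| ≤ 1 + 4 * |R.coeff j| := by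
  simp only [eisensteinShift, coeff_add, coeff_X_pow, coeff_C_mul, coeff_one, hj, if_false]
  grind

end EisensteinShift

theorem abs_coeff_le_of_abs_aeval_le {N Q : ℕ} {D x : ℝ} {P : ℤ[X]} (hx : |x| ≤ 1 / 2)
    (hD : 0 ≤ D) (hQ : 2 ≤ Q)
    (hval : |aeval x P| ≤ 2 * (N + 1)! * (2 * N + 3) * D * ((Q : ℝ) ^ N)⁻¹)
    (hP : ∀ j ≠ 0, |(P.coeff j : ℝ)| ≤ (4 * N + 8) * ((N + 1)! * D * Q)) (j : ℕ) :
    |(P.coeff j : ℝ)| ≤ 6 * (N + 2)! * D * Q := by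
  have hQ2 : (2 : ℝ) ≤ Q := by exact_mod_cast hQ
  have hinv : 2 * ((Q : ℝ) ^ N)⁻¹ ≤ Q := by
    linarith [inv_le_one_of_one_le₀ (one_le_pow₀ (n := N) (one_le_two.trans hQ2))]
  have hval' : |aeval x P| ≤ (2 * N + 3) * ((N + 1)! * D * Q) :=
    calc |aeval x P| ≤ (2 * N + 3) * ((N + 1)! * D * (2 * ((Q : ℝ) ^ N)⁻¹)) := by linarith
      _ ≤ (2 * N + 3) * ((N + 1)! * D * Q) := by gcongr
  have hj := abs_coeff_le_abs_eval_add (P := P.map (algebraMap ℤ ℝ)) hx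
    (by simpa only [coeff_map, eq_intCast] using hP) j
  rw [eval_map_algebraMap, coeff_map, eq_intCast] at hj
  have hpos : 0 ≤ (N + 1)! * D * Q := by positivity
  rw [Nat.factorial_succ]
  push_cast
  linarith

/-- Genericity of `x₀` at scale `Q`: no nonzero integer polynomial of degree at most `N` and height
at most `Q` is small at `x₀` together with its derivative. In the theorem, `N = n - 1`. -/
def IsPolynomialGeneric (N : ℕ) (δ : ℝ) (Q : ℕ) (x₀ : ℝ) : Prop :=
  ∀ P : ℤ[X], P ≠ 0 → P.natDegree ≤ N → (∀ j, |P.coeff j| ≤ (Q : ℤ)) →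
    |aeval x₀ P| < ((Q : ℝ) ^ N)⁻¹ → δ * Q ≤ |aeval x₀ (derivative P)|

namespace IsPolynomialGeneric

variable {N Q : ℕ} {δ x₀ : ℝ}

theorem eq_zero_of_abs_lt (h : IsPolynomialGeneric N δ Q x₀) (hN : 0 < N) (hδ : 0 < δ)
    (hQ : 1 + δ * Q ≤ Q) (hx : |x₀| ≤ 1 / 2) {R : ℤ[X]} (hdeg : R.natDegree ≤ N)
    (hval : |aeval x₀ R| < ((Q : ℝ) ^ N)⁻¹)
    (hcoeff : ∀ j ≠ 0, |(R.coeff j : ℝ)| < δ * Q / derivativeWeight N) : R = 0 := by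
  by_contra hR
  have hW := one_le_derivativeWeight hN
  have hQ1 : (1 : ℝ) ≤ Q := hQ.trans' (le_add_of_nonneg_right (by positivity))
  have hcoeff' : ∀ j ≠ 0, |(R.map (algebraMap ℤ ℝ)).coeff j| < δ * Q / derivativeWeight N := by
    simpa only [coeff_map, eq_intCast] using hcoeff
  have hheight (j : ℕ) : |R.coeff j| ≤ (Q : ℤ) := by
    have hj := abs_coeff_le_abs_eval_add hx (fun j hj => (hcoeff' j hj).le) j
    rw [eval_map_algebraMap, coeff_map, eq_intCast] at hj
    have hinv : ((Q : ℝ) ^ N)⁻¹ ≤ 1 := inv_le_one_of_one_le₀ (one_le_pow₀ hQ1)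
    have hdiv : δ * Q / derivativeWeight N ≤ δ * Q := div_le_self (by positivity) hW
    have : |(R.coeff j : ℝ)| ≤ Q := by linarith
    exact_mod_cast this
  have hderiv := abs_eval_derivative_lt hN (natDegree_map_le.trans hdeg) hx hcoeff'
  rw [derivative_map, eval_map_algebraMap, div_mul_cancel₀ _ (by positivity)] at hderiv
  exact hderiv.not_ge (h R hR hdeg hheight hval)

theorem exists_approx (h : IsPolynomialGeneric N δ Q x₀) (hN : 0 < N) (hδ : 0 < δ)
    (hQ : 1 + δ * Q ≤ Q) (hx : |x₀| ≤ 1 / 2) {T : ℝ[X]} (hT : T.natDegree ≤ N) :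
    ∃ R : ℤ[X], R.natDegree ≤ N ∧
      |aeval x₀ R - T.eval x₀| < ((Q : ℝ) ^ N)⁻¹ * (derivativeWeight N / δ) ^ N ∧
      |aeval x₀ (derivative R) - T.derivative.eval x₀| <
        δ * Q * (derivativeWeight N / δ) ^ N ∧
      ∀ j ≠ 0, |R.coeff j - T.coeff j| ≤ δ * Q * (derivativeWeight N / δ) ^ N := by
  have hW := one_le_derivativeWeight hN
  have hQ0 : (0 : ℝ) < Q := by nlinarith
  have hV : (((Q : ℝ) ^ N)⁻¹ * (δ * Q / derivativeWeight N) ^ N)⁻¹ =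
      (derivativeWeight N / δ) ^ N := by
    simp only [div_pow, mul_pow]
    field_simp
  obtain ⟨R, hdeg, hval, hcoeff⟩ := exists_int_polynomial_approx
    (inv_pos.mpr (pow_pos hQ0 N)) (show 0 < δ * Q / derivativeWeight N by positivity)
    (fun _ => h.eq_zero_of_abs_lt hN hδ hQ hx) hT
  rw [hV] at hval hcoeff
  have hderiv := abs_eval_derivative_lt hN (P := R.map (algebraMap ℤ ℝ) - T)
    ((natDegree_sub_le_iff_left hT).mpr (natDegree_map_le.trans hdeg)) hx
    (by simpa only [coeff_sub, coeff_map, eq_intCast] using hcoeff)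
  rw [derivative_sub, derivative_map, eval_sub, eval_map_algebraMap, mul_right_comm,
    div_mul_cancel₀ _ (by positivity)] at hderiv
  refine ⟨R, hdeg, hval, hderiv, fun j hj => (hcoeff j hj).le.trans ?_⟩
  gcongr
  exact div_le_self (by positivity) hW

theorem exists_eisensteinShift_approx (h : IsPolynomialGeneric N δ Q x₀) (hN : 0 < N) (hδ : 0 < δ)
    (hQ : 1 + δ * Q ≤ Q) (hx : |x₀| ≤ 1 / 2) (c τ : ℝ) :
    ∃ R : ℤ[X], R.natDegree ≤ N ∧
      |aeval x₀ (eisensteinShift (N + 1) R) - c| ≤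
        4 * (derivativeWeight N / δ) ^ N * ((Q : ℝ) ^ N)⁻¹ ∧
      |aeval x₀ (derivative (eisensteinShift (N + 1) R)) - τ| ≤
        4 * (derivativeWeight N / δ) ^ N * (δ * Q) ∧
      ∀ j ≠ 0, |((eisensteinShift (N + 1) R).coeff j : ℝ)| ≤
        |τ| + 4 * (derivativeWeight N / δ) ^ N * (δ * Q) + (N + 2) := by
  set a : ℝ := (τ - (N + 1) * x₀ ^ N) / 4 with ha
  obtain ⟨R, hdeg, hval, hderiv, hcoeff⟩ := h.exists_approx hN hδ hQ hx
    (T := C a * X + C ((c - x₀ ^ (N + 1) - 2) / 4 - a * x₀)) (natDegree_linear_le.trans hN)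
  set V := (derivativeWeight N / δ) ^ N
  simp only [eval_add, eval_mul, eval_C, eval_X, derivative_add, derivative_C_mul, derivative_X,
    derivative_C, mul_one, add_zero, add_sub_cancel] at hval hderiv
  refine ⟨R, hdeg, ?_, ?_, fun j hj => ?_⟩
  · rw [abs_lt] at hval
    rw [aeval_eisensteinShift]
    exact abs_le.mpr ⟨by linarith, by linarith⟩
  · rw [aeval_derivative_eisensteinShift, Nat.add_sub_cancel]
    push_cast
    rw [abs_lt] at hderiv
    exact abs_le.mpr ⟨by linarith, by linarith⟩
  · have hslope : 4 * |a| ≤ |τ| + (N + 1) := by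
      have hpow : |x₀ ^ N| ≤ 1 := by
        rw [abs_pow]
        exact pow_le_one₀ (abs_nonneg _) (hx.trans (by norm_num))
      calc 4 * |a| = |τ - (N + 1) * x₀ ^ N| := by
            rw [ha, abs_div, abs_of_pos (four_pos (α := ℝ))]
            ring
        _ ≤ |τ| + |(N + 1) * x₀ ^ N| := abs_sub _ _
        _ ≤ |τ| + (N + 1) := by
            rw [abs_mul, abs_of_nonneg (by positivity : (0 : ℝ) ≤ N + 1)]
            gcongr
            exact mul_le_of_le_one_right (by positivity) hpow
    have hT : |(C a * X + C ((c - x₀ ^ (N + 1) - 2) / 4 - a * x₀)).coeff j| ≤ |a| := by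
      simp only [coeff_add, coeff_C_mul, coeff_X, coeff_C, hj, if_false, add_zero]
      split_ifs <;> simp
    have hP : |((eisensteinShift (N + 1) R).coeff j : ℝ)| ≤ 1 + 4 * |(R.coeff j : ℝ)| := by
      exact_mod_cast abs_coeff_eisensteinShift_le (N + 1) R hj
    linarith [hcoeff j hj, abs_sub_abs_le_abs_sub (R.coeff j : ℝ)
      ((C a * X + C ((c - x₀ ^ (N + 1) - 2) / 4 - a * x₀)).coeff j)]

theorem exists_monic_irreducible_eval_mem_Icc (h : IsPolynomialGeneric N δ Q x₀) (hN : 0 < N)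
    (hδ : 0 < δ) (hQ : 1 + δ * Q ≤ Q) (hx : |x₀| ≤ 1 / 2) {B : ℝ}
    (hB : 4 * (derivativeWeight N / δ) ^ N ≤ B) (a : ℝ) {t : ℝ} (ht : 0 ≤ t) :
    ∃ P : ℤ[X], P.Monic ∧ P.natDegree = N + 1 ∧ Irreducible (P.map (algebraMap ℤ ℚ)) ∧
      aeval x₀ P ∈ Set.Icc (a * ((Q : ℝ) ^ N)⁻¹) ((a + 2 * B) * ((Q : ℝ) ^ N)⁻¹) ∧
      t ≤ aeval x₀ (derivative P) ∧
      ∀ j ≠ 0, |(P.coeff j : ℝ)| ≤ t + 2 * B * (δ * Q) + (N + 2) := by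
  obtain ⟨R, hdeg, hval, hderiv, hcoeff⟩ := h.exists_eisensteinShift_approx hN hδ hQ hx
    ((a + B) * ((Q : ℝ) ^ N)⁻¹) (t + B * (δ * Q))
  have hdeg' : R.natDegree < N + 1 := Nat.lt_succ_of_le hdeg
  have hvalB := abs_le.mp (hval.trans (mul_le_mul_of_nonneg_right hB (by positivity)))
  have hBδQ := mul_le_mul_of_nonneg_right hB (show 0 ≤ δ * Q by positivity)
  have hderivB := abs_le.mp (hderiv.trans hBδQ)
  have hB0 : 0 ≤ B := hB.trans' (by
    have := one_le_derivativeWeight hN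
    positivity)
  refine ⟨eisensteinShift (N + 1) R, monic_eisensteinShift hdeg', natDegree_eisensteinShift hdeg',
    irreducible_map_eisensteinShift hdeg', ⟨by linarith, by linarith⟩, by linarith,
    fun j hj => (hcoeff j hj).trans ?_⟩
  rw [abs_of_nonneg (by positivity)]
  linarith

theorem exists_monic_irreducible_bounds (h : IsPolynomialGeneric N δ Q x₀) (hN : 0 < N)
    (hδ : 0 < δ) (hδ' : δ ≤ 1) (hQ : 1 + δ * Q ≤ Q) (hx : |x₀| ≤ 1 / 2) :
    ∃ P : ℤ[X], P.Monic ∧ P.natDegree = N + 1 ∧ Irreducible (P.map (algebraMap ℤ ℚ)) ∧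
      (N + 1)! * (δ ^ N)⁻¹ * ((Q : ℝ) ^ N)⁻¹ ≤ aeval x₀ P ∧
      aeval x₀ P ≤ 2 * (N + 1)! * (2 * N + 3) * (δ ^ N)⁻¹ * ((Q : ℝ) ^ N)⁻¹ ∧
      2 * ((N + 1)! * Q) ≤ aeval x₀ (derivative P) ∧
      ∀ j, |(P.coeff j : ℝ)| ≤ 6 * (N + 2)! * (δ ^ N)⁻¹ * Q := by
  obtain ⟨P, hmonic, hdeg, hirr, ⟨hlow, hup⟩, hderiv, hcoeff⟩ :=
    h.exists_monic_irreducible_eval_mem_Icc hN hδ hQ hx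
      (four_mul_derivativeWeight_div_pow_le hN hδ) ((N + 1)! * (δ ^ N)⁻¹)
      (show 0 ≤ 2 * ((N + 1)! * (Q : ℝ)) by positivity)
  have hup' : aeval x₀ P ≤ 2 * (N + 1)! * (2 * N + 3) * (δ ^ N)⁻¹ * ((Q : ℝ) ^ N)⁻¹ :=
    hup.trans_eq (by ring)
  have hval : |aeval x₀ P| ≤ 2 * (N + 1)! * (2 * N + 3) * (δ ^ N)⁻¹ * ((Q : ℝ) ^ N)⁻¹ := by
    rwa [abs_of_nonneg (hlow.trans' (by positivity))]
  have hQ2 : 2 ≤ Q := by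
    have hδQ : 0 ≤ δ * Q := by positivity
    have hQ0 : (0 : ℝ) < Q := by linarith
    have hQ1 : (1 : ℝ) < Q := hQ.trans_lt' (lt_add_of_pos_right _ (by positivity))
    exact_mod_cast hQ1
  refine ⟨P, hmonic, hdeg, hirr, hlow, hup', hderiv,
    abs_coeff_le_of_abs_aeval_le hx (by positivity) hQ2 hval fun j hj => ?_⟩
  have hFQ : (N + 1)! * (Q : ℝ) ≤ (N + 1)! * (δ ^ N)⁻¹ * Q := by
    gcongr
    exact le_mul_of_one_le_right (by positivity)
      ((one_le_inv₀ (pow_pos hδ N)).mpr (pow_le_one₀ hδ.le hδ'))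
  have hB : (N + 1)! * (4 * N + 5) / 2 * (δ ^ N)⁻¹ * (δ * Q) ≤
      (N + 1)! * (4 * N + 5) / 2 * (δ ^ N)⁻¹ * Q := by
    gcongr
    exact mul_le_of_le_one_left (by positivity) hδ'
  have hNQ : (N + 2 : ℝ) ≤ (N + 1)! * Q := by
    have hfac := Nat.self_le_factorial (N + 1)
    have : N + 2 ≤ (N + 1)! * Q := by nlinarith
    exact_mod_cast this
  linarith [hcoeff j hj]

end IsPolynomialGeneric

theorem exists_root_near_of_bounds {N Q : ℕ} {D x₀ : ℝ} {P : ℤ[X]} (hN : 0 < N) (hD : 1 ≤ D)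
    (hQ : 6 * (N + 2) ^ 2 * (N + 1) ^ 3 * (2 * N + 3) * D ^ 2 ≤ Q) (hx : |x₀| ≤ 1 / 2)
    (hdeg : P.natDegree = N + 1) (hP : ∀ j, |(P.coeff j : ℝ)| ≤ 6 * (N + 2)! * D * Q)
    (h₀ : 0 ≤ aeval x₀ P)
    (h₁ : aeval x₀ P ≤ 2 * (N + 1)! * (2 * N + 3) * D * ((Q : ℝ) ^ N)⁻¹)
    (hderiv : 2 * ((N + 1)! * Q) ≤ aeval x₀ (derivative P)) :
    ∃ α : ℝ, aeval α P = 0 ∧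
      |x₀ - α| ≤ (N + 1) * (2 * N + 3) * D * ((Q : ℝ) ^ (N + 1))⁻¹ := by
  have hQ0 : (0 : ℝ) < Q := hQ.trans_lt' (by positivity)
  have hQ1 : (1 : ℝ) ≤ Q := by exact_mod_cast hQ0
  have hQpow : 6 * (N + 2) ^ 2 * (N + 1) ^ 3 * (2 * N + 3) * D ^ 2 ≤ (Q : ℝ) ^ (N + 1) :=
    hQ.trans (le_self_pow₀ hQ1 N.succ_ne_zero)
  simp only [← eval_map_algebraMap, ← derivative_map] at h₀ h₁ hderiv ⊢
  refine exists_root_near (n := N + 1) (natDegree_map_le.trans hdeg.le)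
    (by simpa only [coeff_map, eq_intCast] using hP) hx (by positivity) ?_ ?_ hderiv h₀ ?_
  · rw [← div_eq_mul_inv, div_le_iff₀ (by positivity)]
    have hfactor : (1 : ℝ) ≤ 3 * (N + 2) ^ 2 * (N + 1) ^ 2 * D :=
      calc (1 : ℝ) = 1 * 1 ^ 2 * 1 ^ 2 * 1 := by norm_num
        _ ≤ 3 * (N + 2) ^ 2 * (N + 1) ^ 2 * D := by
          gcongr <;> linarith [N.cast_nonneg (α := ℝ)]
    have hmul := mul_le_mul_of_nonneg_left hfactor
      (show 0 ≤ 2 * ((N + 1) * (2 * N + 3) * D) by positivity)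
    linarith
  · have hfac : ((N + 2)! : ℝ) = (N + 2) * (N + 1)! := by
      rw [Nat.factorial_succ]
      push_cast
      ring
    calc _ = (6 * (N + 2) ^ 2 * (N + 1) ^ 3 * (2 * N + 3) * D ^ 2) * ((Q : ℝ) ^ (N + 1))⁻¹ *
          ((N + 1)! * Q) := by
          rw [hfac]
          push_cast
          ring
      _ ≤ 1 * ((N + 1)! * Q) := by
          gcongr
          rwa [← div_eq_mul_inv, div_le_one (by positivity)]
      _ = _ := one_mul _
  · refine h₁.trans ?_
    calc 2 * (N + 1)! * (2 * N + 3) * D * ((Q : ℝ) ^ N)⁻¹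
        ≤ (N + 1) * (N + 1)! * (2 * N + 3) * D * ((Q : ℝ) ^ N)⁻¹ := by
          gcongr
          exact_mod_cast Nat.succ_le_succ hN
      _ = (N + 1)! * Q * ((N + 1) * (2 * N + 3) * D * ((Q : ℝ) ^ (N + 1))⁻¹) := by
          field_simp
          ring

/-- For `n ≥ 2`, `0 < δ₀ < 1` and sufficiently large integers `Q`: if `x₀ ∈ [-1/2, 1/2]`
is such that every nonzero `P ∈ ℤ[t]` of degree at most `n - 1` and height at most `Q`
with `|P(x₀)| < Q^{-n+1}` satisfies `|P'(x₀)| ≥ δ₀·Q`, then there exists a monic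
irreducible (over `ℚ`) integer polynomial `P` of degree `n` with
`n!·δ₀^{-(n-1)}·Q^{-n+1} ≤ |P(x₀)| ≤ 2·n!·(2n+1)·δ₀^{-(n-1)}·Q^{-n+1}`,
`|P'(x₀)| ≥ n!·Q`, `H(P) ≤ 6·(n+1)!·δ₀^{-(n-1)}·Q`, and a real root `α` with
`|x₀ - α| ≤ n·(2n+1)·δ₀^{-(n-1)}·Q⁻ⁿ`. -/
theorem exists_algebraic_integer_near_generic_point (n : ℕ) (hn : 2 ≤ n)
    (δ₀ : ℝ) (hδ₀ : 0 < δ₀) (hδ₀' : δ₀ < 1) :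
    ∃ Q₀ : ℕ, ∀ Q : ℕ, Q₀ < Q →
      ∀ x₀ : ℝ, x₀ ∈ Set.Icc (-(1/2) : ℝ) (1/2) →
        (∀ P : ℤ[X], P ≠ 0 → P.natDegree ≤ n - 1 →
          (∀ j, |P.coeff j| ≤ (Q : ℤ)) →
          |Polynomial.aeval x₀ P| < ((Q : ℝ) ^ (n - 1))⁻¹ →
          δ₀ * (Q : ℝ) ≤ |Polynomial.aeval x₀ (derivative P)|) →
        ∃ P : ℤ[X], P.Monic ∧ P.natDegree = n ∧
          Irreducible (P.map (algebraMap ℤ ℚ)) ∧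
          (Nat.factorial n : ℝ) * (δ₀ ^ (n - 1))⁻¹ * ((Q : ℝ) ^ (n - 1))⁻¹ ≤
            |Polynomial.aeval x₀ P| ∧
          |Polynomial.aeval x₀ P| ≤
            2 * (Nat.factorial n : ℝ) * (2 * n + 1) * (δ₀ ^ (n - 1))⁻¹ *
              ((Q : ℝ) ^ (n - 1))⁻¹ ∧
          (Nat.factorial n : ℝ) * (Q : ℝ) ≤ |Polynomial.aeval x₀ (derivative P)| ∧
          (∀ j, (|P.coeff j| : ℝ) ≤ 6 * (Nat.factorial (n + 1) : ℝ) * (δ₀ ^ (n - 1))⁻¹ * (Q : ℝ)) ∧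
          ∃ α : ℝ, Polynomial.aeval α P = 0 ∧
            |x₀ - α| ≤ (n : ℝ) * (2 * n + 1) * (δ₀ ^ (n - 1))⁻¹ * ((Q : ℝ) ^ n)⁻¹ := by
  obtain ⟨N, rfl⟩ := Nat.exists_eq_add_of_le' (one_le_two.trans hn)
  have hN : 0 < N := by omega
  obtain ⟨Q₀, hQ₀⟩ := exists_nat_ge (max
    (6 * (N + 2) ^ 2 * (N + 1) ^ 3 * (2 * N + 3) * ((δ₀ ^ N)⁻¹) ^ 2) (1 - δ₀)⁻¹)
  refine ⟨Q₀, fun Q hQ x₀ hx₀ (h : IsPolynomialGeneric N δ₀ Q x₀) => ?_⟩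
  obtain ⟨hlarge, hgap⟩ := max_le_iff.mp (hQ₀.trans (Nat.cast_le.mpr hQ.le))
  have hgap' : 1 + δ₀ * Q ≤ Q := by
    rw [inv_le_iff_one_le_mul₀ (sub_pos.mpr hδ₀')] at hgap
    linarith
  have hx : |x₀| ≤ 1 / 2 := abs_le.mpr hx₀
  have hD : 1 ≤ (δ₀ ^ N)⁻¹ := (one_le_inv₀ (pow_pos hδ₀ N)).mpr (pow_le_one₀ hδ₀.le hδ₀'.le)
  obtain ⟨P, hmonic, hdeg, hirr, hlow, hup, hderiv, hcoeff⟩ :=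
    h.exists_monic_irreducible_bounds hN hδ₀ hδ₀'.le hgap' hx
  have hpos : 0 ≤ aeval x₀ P := hlow.trans' (by positivity)
  obtain ⟨α, hroot, hdist⟩ :=
    exists_root_near_of_bounds hN hD hlarge hx hdeg hcoeff hpos hup hderiv
  have hFQ : (0 : ℝ) ≤ (N + 1)! * Q := by positivity
  have hcast : 2 * ((N + 1 : ℕ) : ℝ) + 1 = 2 * N + 3 := by push_cast; ring
  rw [hcast, Nat.add_sub_cancel, Nat.cast_add_one]
  exact ⟨P, hmonic, hdeg, hirr, hlow.trans (le_abs_self _), (abs_of_nonneg hpos).trans_le hup,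
    (show _ ≤ _ by linarith).trans (le_abs_self _), hcoeff, α, hroot, hdist⟩
end

section
/- Let n ≥ 4, let ε > 0, let u₁, u₂ > 0 satisfy u₁ + u₂ = n - 2, let 0 < δ₀ < 1, and let Q > Q₀(n, δ₀, ε) be a sufficiently large integer. Suppose (x₀, y₀) ∈ [-1/2, 1/2]² satisfies |x₀ - y₀| > ε and is such that every nonzero polynomial P ∈ ℤ[t] with deg P ≤ n - 1 and H(P) ≤ Q satisfying |P(x₀)| < Q^{-u₁} and |P(y₀)| < Q^{-u₂} also satisfies |P'(x₀)| ≥ δ₀·Q and |P'(y₀)| ≥ δ₀·Q. Then there exists a monic polynomial P ∈ ℤ[t] of degree n, irreducible over ℚ, with H(P) < 2·10⁴·(n+4)!·δ₀^{-(n-1)}·Q, having real roots α and β such that |x₀ - α| < n·(2n+1)·δ₀^{-(n-1)}·Q^{-u₁-1} and |y₀ - β| < n·(2n+1)·δ₀^{-(n-1)}·Q^{-u₂-1}. -/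
open Polynomial

/-! Consider the box of real polynomials `P` of degree less than `n` with `|P(x₀)| < Q ^ (-u₁)`,
`|P(y₀)| < Q ^ (-u₂)` and the coefficients of index at least `2` less than `Q`. Since `x₀` and `y₀`
are apart, on this box all coefficients and the derivatives at `x₀` and `y₀` are `O(Q)`, so by
hypothesis the box scaled by `δ₀ / 10` contains no nonzero integer polynomial. Its volume does not
depend on `Q`, and Minkowski's theorem then shows that the integer polynomials in the box scaled by
`O(δ₀ ^ (-(n - 1)))` span the space of polynomials of degree less than `n`.

Hence every monic real polynomial of degree `n` can be approximated, up to an element of a multiple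
of this box, by an integer polynomial congruent to `X ^ n + 2` modulo `4`, which is irreducible by
Eisenstein's criterion. Apply this to `(X - x₀) (X - y₀) (X ^ (n - 2) + K)` with `K` a multiple of
`Q` large enough that its derivatives at `x₀` and `y₀` dominate those of the error: the
approximation has tiny values and derivatives `≫ Q` at `x₀` and `y₀`, hence real roots near them.
-/

open MeasureTheory Module Metric

section Lattice

variable {E : Type*} [NormedAddCommGroup E] [NormedSpace ℝ E] [FiniteDimensional ℝ E]

theorem exists_dual_apply_eq_one_of_lt_top {W : Submodule ℝ E} (hW : W < ⊤) :
    ∃ (f : StrongDual ℝ E) (w : E), W ≤ LinearMap.ker f.toLinearMap ∧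
      ‖f‖ ≤ 1 ∧ ‖w‖ ≤ 1 ∧ f w = 1 := by
  have : ProperSpace E := FiniteDimensional.proper ℝ E
  obtain ⟨g, hg0, hgW⟩ := W.exists_le_ker_of_lt_top hW
  obtain ⟨w, hw, hmax⟩ := (isCompact_closedBall (0 : E) 1).exists_isMaxOn
    ⟨0, mem_closedBall_self zero_le_one⟩ g.continuous_of_finiteDimensional.norm.continuousOn
  have hbound (v : E) : ‖g v‖ ≤ ‖g w‖ * ‖v‖ := by
    rcases eq_or_ne v 0 with rfl | hv
    · simp
    have hmem : ‖v‖⁻¹ • v ∈ closedBall (0 : E) 1 := by simp [norm_smul, norm_ne_zero_iff.2 hv]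
    have hle : ‖g (‖v‖⁻¹ • v)‖ ≤ ‖g w‖ := hmax hmem
    rwa [map_smul, norm_smul, norm_inv, norm_norm, inv_mul_le_iff₀' (norm_pos_iff.2 hv)] at hle
  have hgw : g w ≠ 0 := fun h ↦ hg0 <| LinearMap.ext fun v ↦ by simpa [h] using hbound v
  refine ⟨((g w)⁻¹ • g).mkContinuous 1 fun v ↦ ?_, w, fun v hv ↦ ?_, ?_, ?_, ?_⟩
  · rw [LinearMap.smul_apply, norm_smul, norm_inv, one_mul, inv_mul_le_iff₀ (norm_pos_iff.2 hgw)]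
    exact hbound v
  · simp [LinearMap.mem_ker.1 (hgW hv)]
  · exact LinearMap.mkContinuous_norm_le _ zero_le_one _
  · simpa using hw
  · simp [hgw]

theorem exists_linearMap_det_eq_pow_mul_of_apply_eq_one {f : StrongDual ℝ E} {w : E} (hf : ‖f‖ ≤ 1)
    (hw : ‖w‖ ≤ 1) (hfw : f w = 1) {r R : ℝ} (hr : 0 < r) (hrR : r ≤ R) :
    ∃ T : E →ₗ[ℝ] E, T.det = r ^ (finrank ℝ E - 1) * R ∧ (∀ v, ‖T v‖ ≤ R * ‖v‖) ∧
      (∀ v, f (T v) = R * f v) ∧ ∀ v, f v = 0 → T v = r • v := by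
  let T : E →ₗ[ℝ] E := r • LinearMap.transvection f.toLinearMap (((R - r) / r) • w)
  have hTapply (v : E) : T v = r • v + ((R - r) * f v) • w := by
    simp only [T, LinearMap.smul_apply, LinearMap.transvection.apply, smul_add, smul_smul]
    congr 2
    rw [ContinuousLinearMap.coe_coe]
    field_simp
  have : Nontrivial E := ⟨w, 0, by rintro rfl; simp at hfw⟩
  refine ⟨T, ?_, fun v ↦ ?_, fun v ↦ ?_, fun v hv ↦ by simp [hTapply, hv]⟩
  · rw [LinearMap.det_smul, LinearMap.transvection.det, map_smul, ContinuousLinearMap.coe_coe, hfw,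
      smul_eq_mul, ← pow_sub_one_mul finrank_pos.ne']
    field_simp
    ring
  · calc
      ‖T v‖ ≤ r * ‖v‖ + (R - r) * ‖f v‖ * ‖w‖ := by
        rw [hTapply]
        refine (norm_add_le _ _).trans_eq ?_
        rw [norm_smul, norm_smul, norm_mul, Real.norm_of_nonneg hr.le,
          Real.norm_of_nonneg (sub_nonneg.2 hrR)]
      _ ≤ r * ‖v‖ + (R - r) * ‖v‖ * 1 := by
        have hfv : ‖f v‖ ≤ ‖v‖ := by simpa using f.le_of_opNorm_le hf v
        gcongr
      _ = R * ‖v‖ := by ring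
  · rw [hTapply, map_add, map_smul, map_smul, hfw, smul_eq_mul, smul_eq_mul]
    ring

variable [MeasurableSpace E] [BorelSpace E] (μ : Measure E) [μ.IsAddHaarMeasure]
  {L : Submodule ℤ E} [DiscreteTopology L] [IsZLattice ℝ L]

theorem exists_ne_zero_mem_zlattice_of_covolume_mul_two_pow_lt_measureReal {s : Set E}
    (h_symm : ∀ v ∈ s, -v ∈ s) (h_conv : Convex ℝ s)
    (h : ZLattice.covolume L μ * 2 ^ finrank ℝ E < μ.real s) : ∃ z ∈ L, z ≠ 0 ∧ z ∈ s := by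
  let F := ZSpan.fundamentalDomain ((Free.chooseBasis ℤ L).ofZLatticeBasis ℝ)
  have fund : IsAddFundamentalDomain L F μ := ZLattice.isAddFundamentalDomain _ μ
  have hF : μ F ≠ ⊤ := (ZSpan.fundamentalDomain_isBounded _).measure_lt_top.ne
  have hvol : μ F * 2 ^ finrank ℝ E < μ s := by
    rw [ZLattice.covolume_eq_measure_fundamentalDomain L μ fund] at h
    refine lt_of_lt_of_le ?_ ENNReal.ofReal_toReal_le
    rw [ENNReal.lt_ofReal_iff_toReal_lt (by finiteness)]
    simpa [Measure.real] using h
  have : Countable L.toAddSubgroup := inferInstanceAs (Countable L)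
  obtain ⟨z, hz0, hzs⟩ := exists_ne_zero_mem_lattice_of_measure_mul_two_pow_lt_measure
    (L := L.toAddSubgroup) fund h_symm h_conv hvol
  exact ⟨z, z.2, by simpa using hz0, hzs⟩

theorem exists_mem_ball_map_mem_zlattice (T : E →ₗ[ℝ] E)
    (hT : ZLattice.covolume L μ * 2 ^ finrank ℝ E < |T.det| * μ.real (ball 0 1)) :
    ∃ v, ‖v‖ < 1 ∧ T v ∈ L ∧ T v ≠ 0 := by
  have hvol : μ.real (T '' ball 0 1) = |T.det| * μ.real (ball 0 1) := by
    rw [Measure.real, Measure.addHaar_image_linearMap, ENNReal.toReal_mul,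
      ENNReal.toReal_ofReal (abs_nonneg _), Measure.real]
  obtain ⟨_, hzL, hz0, v, hv, rfl⟩ :=
    exists_ne_zero_mem_zlattice_of_covolume_mul_two_pow_lt_measureReal μ
      (by rintro _ ⟨v, hv, rfl⟩; exact ⟨-v, by simpa using hv, map_neg T v⟩)
      ((convex_ball 0 1).linear_image T) (hvol ▸ hT)
  exact ⟨v, mem_ball_zero_iff.1 hv, hzL, hz0⟩

/- If the lattice points of norm less than `R` lay in the kernel of a functional `f` of norm one
attaining its norm at `w`, stretch the ball of radius `r` by the factor `R / r` along `w`: the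
stretched body is contained in the ball of radius `R`, but its points in `ker f` are already in the
ball of radius `r`. -/
theorem span_zlattice_inter_ball_eq_top {r R : ℝ} (hr : 0 < r)
    (hmin : ∀ z ∈ L, ‖z‖ < r → z = 0)
    (hvol : ZLattice.covolume L μ * 2 ^ finrank ℝ E <
      r ^ (finrank ℝ E - 1) * R * μ.real (ball 0 1)) :
    Submodule.span ℝ ((L : Set E) ∩ ball 0 R) = ⊤ := by
  by_contra hspan
  obtain ⟨f, w, hker, hf, hw, hfw⟩ :=
    exists_dual_apply_eq_one_of_lt_top (lt_top_iff_ne_top.2 hspan)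
  have : Nontrivial E := ⟨w, 0, by rintro rfl; simp at hfw⟩
  have hrR : r ≤ R := by
    by_contra! hRr
    obtain ⟨v, hv, hvL, hv0⟩ := exists_mem_ball_map_mem_zlattice μ (r • LinearMap.id)
      (hvol.trans_le <| by
        rw [LinearMap.det_smul, LinearMap.det_id, mul_one, abs_of_pos (by positivity),
          ← pow_sub_one_mul finrank_pos.ne' r]
        gcongr)
    exact hv0 <| hmin _ hvL <| by simpa [norm_smul, abs_of_pos hr, hr] using hv
  obtain ⟨T, hdet, hnorm, hfT, hTr⟩ :=
    exists_linearMap_det_eq_pow_mul_of_apply_eq_one hf hw hfw hr hrR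
  obtain ⟨v, hv, hvL, hv0⟩ := exists_mem_ball_map_mem_zlattice μ T
    (hvol.trans_le <| by rw [hdet]; gcongr; exact le_abs_self _)
  have hR : 0 < R := hr.trans_le hrR
  have hTv : ‖T v‖ < R := (hnorm v).trans_lt (mul_lt_of_lt_one_right hR hv)
  have hfv : f v = 0 := by
    have : f (T v) = 0 := hker (Submodule.subset_span ⟨hvL, mem_ball_zero_iff.2 hTv⟩)
    exact (mul_eq_zero.1 (hfT v ▸ this)).resolve_left hR.ne'
  refine hv0 (hmin _ hvL ?_)
  rw [hTr v hfv, norm_smul, Real.norm_of_nonneg hr.le]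
  exact mul_lt_of_lt_one_right hr hv

end Lattice

section LinearForms

variable {ι V : Type*} [Fintype ι]

theorem volume_real_ball_pi_one : volume.real (ball (0 : ι → ℝ) 1) = 2 ^ Fintype.card ι := by
  rw [Measure.real, Real.volume_pi_ball _ zero_lt_one, mul_one, ENNReal.toReal_ofReal (by simp)]

variable [DecidableEq ι]

theorem covolume_span_range_eq_abs_det (b : Basis ι ℝ (ι → ℝ)) :
    ZLattice.covolume (Submodule.span ℤ (Set.range b)) = |(Matrix.of b).det| := by
  rw [ZLattice.covolume_eq_measure_fundamentalDomain _ volume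
    (ZSpan.isAddFundamentalDomain b volume), ZSpan.volume_real_fundamentalDomain]

variable [AddCommGroup V] [Module ℝ V]

theorem span_le_span_norm_linearMap_lt {e : ι → V} {φ : V →ₗ[ℝ] ι → ℝ}
    (hdet : (Matrix.of (φ ∘ e)).det ≠ 0) {r R : ℝ} (hr : 0 < r)
    (hmin : ∀ z ∈ Submodule.span ℤ (Set.range e), ‖φ z‖ < r → φ z = 0)
    (hR : |(Matrix.of (φ ∘ e)).det| < r ^ (Fintype.card ι - 1) * R) :
    Submodule.span ℝ (Set.range e) ≤
      Submodule.span ℝ {z | z ∈ Submodule.span ℤ (Set.range e) ∧ ‖φ z‖ < R} := by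
  classical
  set S : Set V := {z | z ∈ Submodule.span ℤ (Set.range e) ∧ ‖φ z‖ < R}
  have hli : LinearIndependent ℝ (φ ∘ e) := Matrix.linearIndependent_rows_of_det_ne_zero hdet
  let b : Basis ι ℝ (ι → ℝ) := basisOfPiSpaceOfLinearIndependent hli
  have hb : ⇑b = φ ∘ e := coe_basisOfPiSpaceOfLinearIndependent hli
  have hL : Submodule.span ℤ (Set.range b) =
      (Submodule.span ℤ (Set.range e)).map (φ.restrictScalars ℤ) := by
    rw [hb, Set.range_comp, Submodule.map_span, LinearMap.coe_restrictScalars]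
  have htop : (Submodule.span ℝ S).map φ = ⊤ := by
    rw [Submodule.map_span, ← span_zlattice_inter_ball_eq_top (R := R) volume hr
      (L := Submodule.span ℤ (Set.range b)) ?_ ?_, hL]
    · congr 1
      ext v
      constructor
      · rintro ⟨z, ⟨hz, hzR⟩, rfl⟩
        exact ⟨Submodule.mem_map_of_mem hz, mem_ball_zero_iff.2 hzR⟩
      · rintro ⟨⟨z, hz, rfl⟩, hzR⟩
        exact ⟨z, ⟨hz, mem_ball_zero_iff.1 hzR⟩, rfl⟩
    · rw [hL]
      rintro _ ⟨z, hz, rfl⟩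
      exact hmin z hz
    · rw [covolume_span_range_eq_abs_det, hb, volume_real_ball_pi_one, finrank_fintype_fun_eq_card]
      gcongr
  have hS : Submodule.span ℝ S ≤ Submodule.span ℝ (Set.range e) :=
    Submodule.span_le.2 fun z hz ↦ Submodule.span_le_restrictScalars ℤ ℝ _ hz.1
  have : FiniteDimensional ℝ (Submodule.span ℝ (Set.range e)) :=
    .span_of_finite ℝ (Set.finite_range e)
  have := Submodule.finiteDimensional_of_le hS
  refine (Submodule.eq_of_le_of_finrank_le hS ?_).ge
  calc
    finrank ℝ (Submodule.span ℝ (Set.range e)) ≤ Fintype.card ι := finrank_range_le_card e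
    _ = finrank ℝ ((Submodule.span ℝ S).map φ) := by
      rw [htop, finrank_top, finrank_fintype_fun_eq_card]
    _ ≤ finrank ℝ (Submodule.span ℝ S) := Submodule.finrank_map_le φ _

end LinearForms

section Rounding

variable {V : Type*} [AddCommGroup V] [Module ℝ V]

theorem exists_mem_span_int_forall_seminorm_sub_le {S : Set V}
    [FiniteDimensional ℝ (Submodule.span ℝ S)] {q : V} (hq : q ∈ Submodule.span ℝ S) :
    ∃ z ∈ Submodule.span ℤ S, ∀ (p : Seminorm ℝ V) (B : ℝ), (∀ v ∈ S, p v ≤ B) →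
      p (q - z) ≤ finrank ℝ (Submodule.span ℝ S) / 2 * B := by
  obtain ⟨b, hbS, hspan, hli⟩ := exists_linearIndependent ℝ S
  have : FiniteDimensional ℝ (Submodule.span ℝ (Set.range ((↑) : b → V))) := by
    rw [Subtype.range_coe, hspan]
    infer_instance
  have := Module.Finite.finite_basis (Basis.span hli)
  have := Fintype.ofFinite b
  rw [← hspan] at hq
  obtain ⟨c, rfl⟩ :=
    (Submodule.mem_span_range_iff_exists_fun ℝ).1 (Subtype.range_coe (s := b) ▸ hq)
  refine ⟨∑ v : b, round (c v) • (v : V), sum_mem fun v _ ↦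
    Submodule.smul_mem _ _ (Submodule.subset_span (hbS v.2)), fun p B hB ↦ ?_⟩
  calc
    p (∑ v : b, c v • (v : V) - ∑ v : b, round (c v) • (v : V))
      = p (∑ v : b, (c v - round (c v)) • (v : V)) := by
        simp only [← Finset.sum_sub_distrib, sub_smul, Int.cast_smul_eq_zsmul]
    _ ≤ ∑ v : b, p ((c v - round (c v)) • (v : V)) :=
        Finset.le_sum_of_subadditive p (map_zero p).le (map_add_le_add p) _ _
    _ ≤ ∑ _v : b, 1 / 2 * B := by
        gcongr with v
        rw [map_smul_eq_mul]
        exact mul_le_mul (abs_sub_round _) (hB v (hbS v.2)) (apply_nonneg _ _) (by norm_num)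
    _ = finrank ℝ (Submodule.span ℝ S) / 2 * B := by
        rw [← hspan, finrank_span_set_eq_card hli, Finset.sum_const, Finset.card_univ,
          Set.toFinset_card, nsmul_eq_mul]
        ring

end Rounding

section Eisenstein

theorem irreducible_X_pow_add_of_prime {R : Type*} [CommRing R] [IsDomain R] {π : R} (hπ : Prime π)
    {n : ℕ} (hn : n ≠ 0) {N : R[X]} (hN : N.degree < n) (hdvd : C π ∣ N)
    (hsq : ¬ π ^ 2 ∣ N.coeff 0) : Irreducible (X ^ n + N) := by
  have hmonic : (X ^ n + N).Monic := monic_X_pow_add hN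
  have hdeg : (X ^ n + N).natDegree = n := natDegree_eq_of_degree_eq_some <| by
    rw [degree_add_eq_left_of_degree_lt (by rwa [degree_X_pow]), degree_X_pow]
  have hcoeff (j : ℕ) (hj : j < n) : (X ^ n + N).coeff j = N.coeff j := by
    rw [coeff_add, coeff_X_pow, if_neg hj.ne, zero_add]
  refine IsEisensteinAt.irreducible (𝓟 := Ideal.span {π}) ⟨?_, fun {j} hj ↦ ?_, ?_⟩
    ((Ideal.span_singleton_prime hπ.ne_zero).2 hπ) hmonic.isPrimitive (by omega)
  · rw [hmonic.leadingCoeff, Ideal.mem_span_singleton]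
    exact hπ.not_dvd_one
  · rw [hcoeff j (hdeg ▸ hj), Ideal.mem_span_singleton]
    exact C_dvd_iff_dvd_coeff π N |>.1 hdvd j
  · rwa [hcoeff 0 hn.bot_lt, Ideal.span_singleton_pow, Ideal.mem_span_singleton]

theorem monic_and_natDegree_eq_and_irreducible_X_pow_add_two_add_four_mul {n : ℕ} (hn : n ≠ 0)
    {G : ℤ[X]} (hG : G.degree < n) :
    (X ^ n + (C 2 + C 4 * G)).Monic ∧ (X ^ n + (C 2 + C 4 * G)).natDegree = n ∧
      Irreducible ((X ^ n + (C 2 + C 4 * G)).map (algebraMap ℤ ℚ)) := by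
  have hN : (C 2 + C 4 * G).degree < (n : WithBot ℕ) := by
    rw [C_mul', ← mem_degreeLT] at *
    exact add_mem (mem_degreeLT.2 <| degree_C_le.trans_lt <| by exact_mod_cast hn.bot_lt)
      (Submodule.smul_mem _ _ hG)
  have hmonic := monic_X_pow_add hN
  refine ⟨hmonic, natDegree_eq_of_degree_eq_some ?_, ?_⟩
  · rw [degree_add_eq_left_of_degree_lt (by rwa [degree_X_pow]), degree_X_pow]
  · rw [← hmonic.irreducible_iff_irreducible_map_fraction_map]
    refine irreducible_X_pow_add_of_prime Int.prime_two hn hN ?_ ?_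
    · exact dvd_add dvd_rfl (dvd_mul_of_dvd_left (_root_.map_dvd C (by norm_num : (2 : ℤ) ∣ 4)) G)
    · rw [coeff_add, coeff_C_zero, coeff_C_mul]
      omega

theorem mem_lifts_of_mem_span_int {R A : Type*} [Ring R] [Ring A] {f : R →+* A} {S : Set A[X]}
    (hS : S ⊆ lifts f) {z : A[X]} (hz : z ∈ Submodule.span ℤ S) : z ∈ lifts f := by
  have hspan : Submodule.span ℤ S ≤ (liftsRing f).toAddSubgroup.toIntSubmodule :=
    Submodule.span_le.2 hS
  exact hspan hz

theorem exists_monic_irreducible_seminorm_sub_le {n : ℕ} (hn : n ≠ 0) {S : Set ℝ[X]}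
    (hS : S ⊆ lifts (algebraMap ℤ ℝ)) (hspan : Submodule.span ℝ S = degreeLT ℝ n)
    {T : ℝ[X]} (hT : T.Monic) (hTn : T.natDegree = n) :
    ∃ F : ℤ[X], F.Monic ∧ F.natDegree = n ∧ Irreducible (F.map (algebraMap ℤ ℚ)) ∧
      ∀ (p : Seminorm ℝ ℝ[X]) (B : ℝ), (∀ v ∈ S, p v ≤ B) →
        p (F.map (algebraMap ℤ ℝ) - T) ≤ 2 * n * B := by
  have hq : (1 / 4 : ℝ) • (T - (X ^ n + C 2)) ∈ Submodule.span ℝ S := by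
    rw [hspan]
    refine Submodule.smul_mem _ _ (mem_degreeLT.2 ?_)
    have hTdeg : T.degree = n := by rw [degree_eq_natDegree hT.ne_zero, hTn]
    exact (degree_sub_lt_left (by rw [hTdeg, degree_X_pow_add_C hn.bot_lt]) hT.ne_zero
      (by rw [hT.leadingCoeff, leadingCoeff_X_pow_add_C hn.bot_lt])).trans_eq hTdeg
  have : FiniteDimensional ℝ (Submodule.span ℝ S) := hspan ▸ inferInstance
  obtain ⟨z, hz, hp⟩ := exists_mem_span_int_forall_seminorm_sub_le hq
  obtain ⟨G, rfl⟩ := mem_lifts_of_mem_span_int hS hz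
  rw [coe_mapRingHom] at hz hp
  have hG : G.degree < n := by
    have := Submodule.span_le_restrictScalars ℤ ℝ S hz
    rwa [Submodule.restrictScalars_mem, hspan, mem_degreeLT,
      degree_map_eq_of_injective (algebraMap ℤ ℝ).injective_int] at this
  obtain ⟨hmonic, hdeg, hirr⟩ :=
    monic_and_natDegree_eq_and_irreducible_X_pow_add_two_add_four_mul hn hG
  refine ⟨X ^ n + (C 2 + C 4 * G), hmonic, hdeg, hirr, fun p B hB ↦ ?_⟩
  have hfinrank : finrank ℝ (Submodule.span ℝ S) = n := by
    rw [hspan, finrank_eq_card_basis (degreeLT.basis ℝ n), Fintype.card_fin]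
  have hsub : (X ^ n + (C 2 + C 4 * G)).map (algebraMap ℤ ℝ) - T =
      (-4 : ℝ) • ((1 / 4 : ℝ) • (T - (X ^ n + C 2)) - G.map (algebraMap ℤ ℝ)) := by
    simp only [Polynomial.map_add, Polynomial.map_smul, Polynomial.map_pow, map_X,
      Polynomial.map_C, algebraMap_int_eq, Int.coe_castRingHom, Int.cast_ofNat, C_mul']
    module
  calc
    p ((X ^ n + (C 2 + C 4 * G)).map (algebraMap ℤ ℝ) - T)
      = 4 * p ((1 / 4 : ℝ) • (T - (X ^ n + C 2)) - G.map (algebraMap ℤ ℝ)) := by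
        rw [hsub, map_smul_eq_mul, norm_neg, Real.norm_ofNat]
    _ ≤ 4 * (n / 2 * B) := by
        gcongr
        exact hfinrank ▸ hp p B hB
    _ = 2 * n * B := by ring

end Eisenstein

section CoeffBounds

variable {𝕜 : Type*} [NormedField 𝕜] {P : 𝕜[X]} {M : ℝ}

theorem norm_eval_iterate_derivative_le (hM : ∀ j, ‖P.coeff j‖ ≤ M) (k : ℕ) {t : 𝕜} {ρ : ℝ}
    (ht : ‖t‖ ≤ ρ) (hρ : ρ < 1) :
    ‖(derivative^[k] P).eval t‖ ≤ k.factorial * M / (1 - ρ) ^ (k + 1) := by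
  have hM0 : 0 ≤ M := (norm_nonneg _).trans (hM 0)
  have hρ0 : 0 ≤ ρ := (norm_nonneg t).trans ht
  have hsum : HasSum (fun j ↦ ((j + k).choose k : ℝ) * ρ ^ j) (1 / (1 - ρ) ^ (k + 1)) :=
    hasSum_choose_mul_geometric_of_norm_lt_one k (by rwa [Real.norm_of_nonneg hρ0])
  have hhasse : ‖(hasseDeriv k P).eval t‖ ≤ M / (1 - ρ) ^ (k + 1) := calc
    ‖(hasseDeriv k P).eval t‖
      ≤ ∑ j ∈ Finset.range ((hasseDeriv k P).natDegree + 1), M * ((j + k).choose k * ρ ^ j) := by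
        rw [eval_eq_sum_range]
        refine norm_sum_le_of_le _ fun j _ ↦ ?_
        rw [hasseDeriv_coeff, norm_mul, norm_mul, norm_pow, mul_right_comm, mul_comm]
        gcongr
        · exact hM _
        · exact (Nat.norm_cast_le _).trans_eq (by simp)
    _ ≤ M * (1 / (1 - ρ) ^ (k + 1)) := by
        rw [← Finset.mul_sum]
        gcongr
        exact sum_le_hasSum _ (fun _ _ ↦ by positivity) hsum
    _ = M / (1 - ρ) ^ (k + 1) := by ring
  rw [← factorial_smul_hasseDeriv, LinearMap.smul_apply, nsmul_eq_mul, eval_mul, eval_natCast,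
    norm_mul, mul_div_assoc]
  gcongr
  exact (Nat.norm_cast_le _).trans_eq (by simp)

end CoeffBounds

section Roots

theorem exists_eq_zero_of_abs_deriv_sub_le {f : ℝ → ℝ} {x r c η : ℝ} (hr : 0 ≤ r)
    (hf : ∀ t ∈ closedBall x r, DifferentiableAt ℝ f t)
    (hη : ∀ t ∈ closedBall x r, |deriv f t - c| ≤ η) (hx : |f x| + η * r ≤ |c| * r) :
    ∃ α ∈ closedBall x r, f α = 0 := by
  have hlin (s : ℝ) (hs : |s| = r) : |f (x + s) - f x - c * s| ≤ η * r := by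
    have hmvt := (convex_closedBall x r).norm_image_sub_le_of_norm_deriv_le
      (f := fun t ↦ f t - c * t) (C := η)
      (fun t ht ↦ (hf t ht).sub ((differentiableAt_id).const_mul c))
      (fun t ht ↦ ?_) (mem_closedBall_self hr) (y := x + s) (by simp [hs])
    · rw [add_sub_cancel_left, Real.norm_eq_abs, Real.norm_eq_abs, hs] at hmvt
      convert hmvt using 2
      ring
    · rw [deriv_fun_sub (hf t ht) (by fun_prop), deriv_const_mul_field, deriv_id'', mul_one]
      exact hη t ht
  have hright := abs_le.1 (hlin r (abs_of_nonneg hr))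
  have hleft := abs_le.1 (hlin (-r) (by rw [abs_neg, abs_of_nonneg hr]))
  have hfx := abs_le.1 (le_refl |f x|)
  have hzero : (0 : ℝ) ∈ Set.uIcc (f (x - r)) (f (x + r)) := by
    rw [sub_eq_add_neg, Set.mem_uIcc]
    rcases abs_cases c with ⟨hc, _⟩ | ⟨hc, _⟩ <;> rw [hc] at hx
    · left; constructor <;> linarith
    · right; constructor <;> linarith
  have hIcc : Set.uIcc (x - r) (x + r) = closedBall x r := by
    rw [Set.uIcc_of_le (by linarith), Real.closedBall_eq_Icc]
  rw [← hIcc]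
  exact intermediate_value_uIcc
    (fun t ht ↦ (hf t (hIcc ▸ ht)).continuousAt.continuousWithinAt) hzero

theorem exists_isRoot_abs_sub_le {F : ℝ[X]} {H x r : ℝ} (hH : ∀ j, |F.coeff j| ≤ H)
    (hx : |x| ≤ 1 / 2) (hr : 0 ≤ r) (hr' : r ≤ 1 / 4)
    (hF : |F.eval x| + 128 * H * r ^ 2 ≤ |F.derivative.eval x| * r) :
    ∃ α, F.IsRoot α ∧ |x - α| ≤ r := by
  have hderiv₂ (t : ℝ) (ht : t ∈ closedBall x r) : |F.derivative.derivative.eval t| ≤ 128 * H := by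
    have ht' : ‖t‖ ≤ 3 / 4 := by
      have := norm_le_norm_add_const_of_dist_le (mem_closedBall.1 ht)
      rw [Real.norm_eq_abs x] at this
      linarith
    refine (norm_eval_iterate_derivative_le (𝕜 := ℝ) hH 2 ht' (by norm_num)).trans_eq ?_
    norm_num [Nat.factorial]
    ring
  have hderiv (t : ℝ) (ht : t ∈ closedBall x r) :
      |F.derivative.eval t - F.derivative.eval x| ≤ 128 * H * r := by
    have hH0 : 0 ≤ H := (abs_nonneg _).trans (hH 0)
    calc
      |F.derivative.eval t - F.derivative.eval x| ≤ 128 * H * |t - x| :=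
        (convex_closedBall x r).norm_image_sub_le_of_norm_deriv_le
          (fun s _ ↦ F.derivative.differentiableAt)
          (fun s hs ↦ by rw [Polynomial.deriv]; exact hderiv₂ s hs) (mem_closedBall_self hr) ht
      _ ≤ 128 * H * r := by
        gcongr
        exact mem_closedBall.1 ht
  obtain ⟨α, hα, hFα⟩ := exists_eq_zero_of_abs_deriv_sub_le hr (fun t _ ↦ F.differentiableAt)
    (fun t ht ↦ by rw [Polynomial.deriv]; exact hderiv t ht) (by linarith)
  exact ⟨α, hFα, by rwa [mem_closedBall', Real.dist_eq] at hα⟩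

end Roots

section Box

variable {P : ℝ[X]} {x y L M : ℝ}

theorem abs_eval_le_two_mul (hM : ∀ j, |P.coeff j| ≤ M) (hx : |x| ≤ 1 / 2) :
    |P.eval x| ≤ 2 * M := by
  refine (norm_eval_iterate_derivative_le (𝕜 := ℝ) hM 0 hx (by norm_num)).trans_eq ?_
  norm_num
  ring

theorem abs_eval_derivative_le_four_mul (hM : ∀ j, |P.coeff j| ≤ M) (hx : |x| ≤ 1 / 2) :
    |P.derivative.eval x| ≤ 4 * M := by
  refine (norm_eval_iterate_derivative_le (𝕜 := ℝ) hM 1 hx (by norm_num)).trans_eq ?_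
  norm_num
  ring

theorem abs_eval_sub_eval_le (hM : ∀ j, |P.coeff j| ≤ M) (hx : |x| ≤ 1 / 2) (hy : |y| ≤ 1 / 2) :
    |P.eval x - P.eval y| ≤ 4 * M * |x - y| :=
  (convex_closedBall (0 : ℝ) (1 / 2)).norm_image_sub_le_of_norm_deriv_le
    (fun s _ ↦ P.differentiableAt)
    (fun s hs ↦ by
      rw [Polynomial.deriv]
      exact abs_eval_derivative_le_four_mul hM (mem_closedBall_zero_iff.1 hs))
    (mem_closedBall_zero_iff.2 hy) (mem_closedBall_zero_iff.2 hx)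

theorem abs_le_of_abs_eval_add_mul_add_le {a b : ℝ} (hx : |x| ≤ 1 / 2) (hy : |y| ≤ 1 / 2)
    (hxy : x ≠ y) (hM : ∀ j, |P.coeff j| ≤ M) (hPx : |P.eval x + a * x + b| ≤ L)
    (hPy : |P.eval y + a * y + b| ≤ L) (hL : 2 * L ≤ M * |x - y|) :
    |a| ≤ 5 * M ∧ |b| ≤ 5 * M := by
  have hM0 : 0 ≤ M := (abs_nonneg _).trans (hM 0)
  have hxy1 : |x - y| ≤ 1 := (abs_sub _ _).trans (by linarith)
  have ha : |a| ≤ 5 * M := by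
    refine le_of_mul_le_mul_right ?_ (abs_pos.2 (sub_ne_zero.2 hxy))
    calc
      |a| * |x - y| = |P.eval x + a * x + b - (P.eval y + a * y + b) - (P.eval x - P.eval y)| := by
        rw [← abs_mul]
        ring_nf
      _ ≤ L + L + 4 * M * |x - y| :=
        (abs_sub _ _).trans (add_le_add ((abs_sub _ _).trans (add_le_add hPx hPy))
          (abs_eval_sub_eval_le hM hx hy))
      _ ≤ 5 * M * |x - y| := by linarith
  refine ⟨ha, ?_⟩
  calc
    |b| = |P.eval x + a * x + b - P.eval x - a * x| := by ring_nf
    _ ≤ L + 2 * M + 5 * M * (1 / 2) := by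
      refine (abs_sub _ _).trans (add_le_add ((abs_sub _ _).trans
        (add_le_add hPx (abs_eval_le_two_mul hM hx))) ?_)
      rw [abs_mul]
      gcongr
    _ ≤ 5 * M := by linarith [mul_le_of_le_one_right hM0 hxy1]

theorem abs_coeff_le_and_abs_eval_derivative_le (hx : |x| ≤ 1 / 2) (hy : |y| ≤ 1 / 2) (hxy : x ≠ y)
    (hM : ∀ j, |P.coeff (j + 2)| ≤ M) (hPx : |P.eval x| ≤ L) (hPy : |P.eval y| ≤ L)
    (hL : 2 * L ≤ M * |x - y|) :
    (∀ j, |P.coeff j| ≤ 5 * M) ∧ |P.derivative.eval x| ≤ 9 * M := by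
  have hM0 : 0 ≤ M := (abs_nonneg _).trans (hM 0)
  set T : ℝ[X] := P.divX.divX * X ^ 2 with hTdef
  have hP : P = T + C (P.coeff 1) * X + C (P.coeff 0) := by
    nth_rw 1 [← divX_mul_X_add P, ← divX_mul_X_add P.divX, coeff_divX, hTdef]
    ring
  have hTcoeff (j : ℕ) : |T.coeff j| ≤ M := by
    rw [hTdef, coeff_mul_X_pow']
    split_ifs
    · rw [coeff_divX, coeff_divX, add_assoc]
      exact hM _
    · simpa using hM0
  have heval (t : ℝ) : P.eval t = T.eval t + P.coeff 1 * t + P.coeff 0 := by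
    conv_lhs => rw [hP]
    simp
  obtain ⟨hcoeff₁, hcoeff₀⟩ :=
    abs_le_of_abs_eval_add_mul_add_le hx hy hxy hTcoeff (heval x ▸ hPx) (heval y ▸ hPy) hL
  refine ⟨?_, ?_⟩
  · rintro (_ | _ | j)
    · exact hcoeff₀
    · exact hcoeff₁
    · exact (hM j).trans (by linarith)
  · have hderiv : P.derivative.eval x = T.derivative.eval x + P.coeff 1 := by
      conv_lhs => rw [hP]
      simp
    rw [hderiv]
    exact (abs_add_le _ _).trans (by linarith [abs_eval_derivative_le_four_mul hTcoeff hx])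

end Box

section BoxMap

/-- The linear map whose sup norm compares `P(x)`, `P(y)` and the coefficients of `P` of index
`2, …, m + 1` with `q₁`, `q₂` and `Q` respectively, so that `‖boxMap m x y q₁ q₂ Q P‖ < r` says that
`P` lies in `r` times a box. -/
noncomputable def boxMap (m : ℕ) (x y q₁ q₂ Q : ℝ) : ℝ[X] →ₗ[ℝ] Fin 2 ⊕ Fin m → ℝ :=
  LinearMap.pi <| Sum.elim ![q₁⁻¹ • leval x, q₂⁻¹ • leval y] fun j ↦ Q⁻¹ • lcoeff ℝ (j + 2)

variable {m : ℕ} {x y q₁ q₂ Q r R : ℝ}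

theorem norm_boxMap_lt_iff (hq₁ : 0 < q₁) (hq₂ : 0 < q₂) (hQ : 0 < Q) (hr : 0 < r) {P : ℝ[X]} :
    ‖boxMap m x y q₁ q₂ Q P‖ < r ↔
      |P.eval x| < r * q₁ ∧ |P.eval y| < r * q₂ ∧ ∀ j < m, |P.coeff (j + 2)| < r * Q := by
  rw [pi_norm_lt_iff hr, Sum.forall, Fin.forall_fin_two, and_assoc, Fin.forall_iff]
  simp [boxMap, leval, abs_of_pos, hq₁, hq₂, hQ, inv_mul_lt_iff₀, mul_comm r]

theorem det_boxMap_X_pow :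
    (Matrix.of (boxMap m x y q₁ q₂ Q ∘ fun i ↦ X ^ (finSumFinEquiv i : ℕ))).det =
      (y - x) / (q₁ * q₂ * Q ^ m) := by
  have hblocks :
      Matrix.of (boxMap m x y q₁ q₂ Q ∘ fun i : Fin 2 ⊕ Fin m ↦ X ^ (finSumFinEquiv i : ℕ)) =
        Matrix.fromBlocks !![q₁⁻¹, q₂⁻¹; q₁⁻¹ * x, q₂⁻¹ * y] 0
          (Matrix.of fun j : Fin m ↦ ![q₁⁻¹ * x ^ (2 + j : ℕ), q₂⁻¹ * y ^ (2 + j : ℕ)])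
          (Q⁻¹ • 1) := by
    ext (i | i) (j | j)
    · fin_cases i <;> fin_cases j <;> simp [boxMap, leval]
    · fin_cases i <;> simp [boxMap, coeff_X, coeff_one]
    · fin_cases j <;> simp [boxMap, leval]
    · simp [boxMap, coeff_X_pow, Matrix.one_apply, add_comm 2, Fin.ext_iff, eq_comm]
  rw [hblocks, Matrix.det_fromBlocks_zero₁₂, Matrix.det_fin_two_of, Matrix.det_smul,
    Matrix.det_one, Fintype.card_fin, inv_pow]
  field_simp

theorem abs_coeff_le_and_abs_eval_derivative_le_of_norm_boxMap_lt (hx : |x| ≤ 1 / 2)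
    (hy : |y| ≤ 1 / 2) (hq₁ : 0 < q₁) (hq₁' : q₁ ≤ 1) (hq₂ : 0 < q₂) (hq₂' : q₂ ≤ 1)
    (hQ : 0 < Q) (hQxy : 2 ≤ Q * |x - y|) (hr : 0 < r) {P : ℝ[X]}
    (hP : P ∈ degreeLT ℝ (m + 2)) (hPr : ‖boxMap m x y q₁ q₂ Q P‖ < r) :
    (∀ j, |P.coeff j| ≤ 5 * (r * Q)) ∧ |P.derivative.eval x| ≤ 9 * (r * Q) ∧
      |P.derivative.eval y| ≤ 9 * (r * Q) := by
  obtain ⟨hPx, hPy, hcoeff⟩ := (norm_boxMap_lt_iff hq₁ hq₂ hQ hr).1 hPr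
  have hxy : x ≠ y := fun h ↦ by norm_num [h] at hQxy
  have hM (j : ℕ) : |P.coeff (j + 2)| ≤ r * Q := by
    rcases lt_or_ge j m with hj | hj
    · exact (hcoeff j hj).le
    · rw [coeff_eq_zero_of_degree_lt ((mem_degreeLT.1 hP).trans_le (by exact_mod_cast by omega)),
        abs_zero]
      positivity
  have hPx' : |P.eval x| ≤ r := hPx.le.trans (mul_le_of_le_one_right hr.le hq₁')
  have hPy' : |P.eval y| ≤ r := hPy.le.trans (mul_le_of_le_one_right hr.le hq₂')
  have hL : 2 * r ≤ r * Q * |x - y| := by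
    rw [mul_assoc, mul_comm 2]
    gcongr
  obtain ⟨hbound, hx'⟩ := abs_coeff_le_and_abs_eval_derivative_le hx hy hxy hM hPx' hPy' hL
  exact ⟨hbound, hx', (abs_coeff_le_and_abs_eval_derivative_le hy hx hxy.symm hM hPy' hPx'
    (by rwa [abs_sub_comm])).2⟩

theorem span_lifts_inter_degreeLT_norm_boxMap_lt (hxy : x ≠ y) (hq₁ : 0 < q₁) (hq₂ : 0 < q₂)
    (hQ : 0 < Q) (hr : 0 < r)
    (hmin : ∀ P : ℤ[X], P.degree < ↑(m + 2) →
      ‖boxMap m x y q₁ q₂ Q (P.map (algebraMap ℤ ℝ))‖ < r → P = 0)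
    (hR : |x - y| / (q₁ * q₂ * Q ^ m) < r ^ (m + 1) * R) :
    Submodule.span ℝ {P | P ∈ lifts (algebraMap ℤ ℝ) ∧ P ∈ degreeLT ℝ (m + 2) ∧
      ‖boxMap m x y q₁ q₂ Q P‖ < R} = degreeLT ℝ (m + 2) := by
  let e : Fin 2 ⊕ Fin m → ℝ[X] := fun i ↦ X ^ (finSumFinEquiv i : ℕ)
  have hspan : Submodule.span ℝ (Set.range e) = degreeLT ℝ (m + 2) := by
    rw [degreeLT_eq_span_X_pow, add_comm m, Finset.coe_image, Finset.coe_range, ← Fin.range_val,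
      ← Set.range_comp, ← EquivLike.range_comp _ finSumFinEquiv]
    rfl
  have hlifts {z : ℝ[X]} (hz : z ∈ Submodule.span ℤ (Set.range e)) : z ∈ lifts (algebraMap ℤ ℝ) :=
    mem_lifts_of_mem_span_int (Set.range_subset_iff.2 fun _ ↦ X_pow_mem_lifts _ _) hz
  have hdegree {z : ℝ[X]} (hz : z ∈ Submodule.span ℤ (Set.range e)) : z ∈ degreeLT ℝ (m + 2) :=
    hspan ▸ Submodule.span_le_restrictScalars ℤ ℝ _ hz
  have hdet : (Matrix.of (boxMap m x y q₁ q₂ Q ∘ e)).det = (y - x) / (q₁ * q₂ * Q ^ m) :=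
    det_boxMap_X_pow
  refine (Submodule.span_le.2 fun z hz ↦ hz.2.1).antisymm ?_
  rw [← hspan]
  refine (span_le_span_norm_linearMap_lt (φ := boxMap m x y q₁ q₂ Q) (R := R) ?_ hr ?_ ?_).trans
    (Submodule.span_mono fun z hz ↦ ⟨hlifts hz.1, hspan ▸ hdegree hz.1, hz.2⟩)
  · rw [hdet]
    have := sub_ne_zero.2 hxy.symm
    positivity
  · intro z hz hzr
    obtain ⟨P, rfl⟩ := hlifts hz
    have hP := mem_degreeLT.1 (hdegree hz)
    rw [coe_mapRingHom] at hP hzr ⊢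
    rw [degree_map_eq_of_injective (algebraMap ℤ ℝ).injective_int] at hP
    rw [hmin P hP hzr, Polynomial.map_zero, map_zero]
  · rw [hdet, abs_div, abs_of_pos (by positivity : 0 < q₁ * q₂ * Q ^ m), abs_sub_comm]
    simpa [add_comm 2] using hR

end BoxMap

section Target

variable {R : Type*}

theorem monic_and_natDegree_eq_X_sub_C_mul_X_sub_C_mul_X_pow_add_C [CommRing R] [Nontrivial R]
    {m : ℕ} (hm : m ≠ 0) (x y K : R) :
    ((X - C x) * (X - C y) * (X ^ m + C K)).Monic ∧
      ((X - C x) * (X - C y) * (X ^ m + C K)).natDegree = m + 2 := by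
  have hxy := (monic_X_sub_C x).mul (monic_X_sub_C y)
  have hK : (X ^ m + C K).Monic := monic_X_pow_add_C K hm
  refine ⟨hxy.mul hK, ?_⟩
  rw [hxy.natDegree_mul hK, (monic_X_sub_C x).natDegree_mul (monic_X_sub_C y), natDegree_X_sub_C,
    natDegree_X_sub_C, natDegree_X_pow_add_C, add_comm]

theorem norm_coeff_mul_X_pow_add_C_le [NormedCommRing R] {P : R[X]} {M : ℝ}
    (hM : ∀ j, ‖P.coeff j‖ ≤ M) (m : ℕ) (K : R) (j : ℕ) :
    ‖(P * (X ^ m + C K)).coeff j‖ ≤ M * (1 + ‖K‖) := by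
  have hM0 : 0 ≤ M := (norm_nonneg _).trans (hM 0)
  rw [mul_add, coeff_add, coeff_mul_X_pow', coeff_mul_C, mul_add, mul_one]
  refine norm_add_le_of_le ?_ (norm_mul_le_of_le (hM j) le_rfl)
  split_ifs
  · exact hM _
  · rwa [norm_zero]

theorem abs_coeff_X_sub_C_mul_X_sub_C_le_one {x y : ℝ} (hx : |x| ≤ 1 / 2) (hy : |y| ≤ 1 / 2)
    (j : ℕ) : |((X - C x) * (X - C y)).coeff j| ≤ 1 := by
  have hquad : (X - C x) * (X - C y) = X ^ 2 + C (-(x + y)) * X + C (x * y) := by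
    simp only [C_add, C_mul, C_neg]
    ring
  have hxy : |x * y| ≤ 1 := by
    rw [abs_mul]
    exact mul_le_one₀ (by linarith) (abs_nonneg y) (by linarith)
  have hxy' : |-(x + y)| ≤ 1 := by
    rw [abs_neg]
    exact (abs_add_le x y).trans (by linarith)
  rw [hquad]
  rcases j with _ | _ | _ | j
  · simpa using hxy
  · simpa [coeff_C, coeff_X_pow, -neg_add_rev] using hxy'
  · simp
  · simp [coeff_X_pow]

theorem mul_sub_one_le_abs_eval_derivative {x : ℝ} (hx : |x| ≤ 1) (y K : ℝ) (m : ℕ) :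
    |x - y| * (K - 1) ≤ |((X - C x) * (X - C y) * (X ^ m + C K)).derivative.eval x| := by
  have hpow : |x ^ m| ≤ 1 := by
    rw [abs_pow]
    exact pow_le_one₀ (abs_nonneg x) hx
  have hderiv : ((X - C x) * (X - C y) * (X ^ m + C K)).derivative.eval x =
      (x - y) * (x ^ m + K) := by
    rw [mul_assoc, derivative_mul]
    simp
  rw [hderiv, abs_mul]
  gcongr
  linarith [le_abs_self (x ^ m + K), neg_le_of_abs_le hpow]

end Target

section Approximation

variable {m : ℕ} {x y q₁ q₂ Q r R : ℝ}

theorem eq_zero_of_norm_boxMap_lt_of_large_derivative {δ : ℝ} (hx : |x| ≤ 1 / 2) (hy : |y| ≤ 1 / 2)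
    (hq₁ : 0 < q₁) (hq₁' : q₁ ≤ 1) (hq₂ : 0 < q₂) (hq₂' : q₂ ≤ 1) (hQ : 0 < Q)
    (hQxy : 2 ≤ Q * |x - y|) (hδ : 0 < δ) (hδ' : δ ≤ 1)
    (hgen : ∀ P : ℤ[X], P ≠ 0 → P.natDegree ≤ m + 1 → (∀ j, (|P.coeff j| : ℝ) ≤ Q) →
      |aeval x P| < q₁ → |aeval y P| < q₂ →
      δ * Q ≤ |aeval x (derivative P)| ∨ δ * Q ≤ |aeval y (derivative P)|)
    {P : ℤ[X]} (hP : P.degree < ↑(m + 2))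
    (hPδ : ‖boxMap m x y q₁ q₂ Q (P.map (algebraMap ℤ ℝ))‖ < δ / 10) : P = 0 := by
  have hr : 0 < δ / 10 := by positivity
  have hδQ : 0 < δ * Q := by positivity
  have hPdeg : P.map (algebraMap ℤ ℝ) ∈ degreeLT ℝ (m + 2) := by
    rwa [mem_degreeLT, degree_map_eq_of_injective (algebraMap ℤ ℝ).injective_int]
  obtain ⟨hcoeff, hx', hy'⟩ := abs_coeff_le_and_abs_eval_derivative_le_of_norm_boxMap_lt hx hy hq₁
    hq₁' hq₂ hq₂' hQ hQxy hr hPdeg hPδ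
  obtain ⟨hPx, hPy, -⟩ := (norm_boxMap_lt_iff hq₁ hq₂ hQ hr).1 hPδ
  rw [derivative_map, eval_map_algebraMap] at hx' hy'
  rw [eval_map_algebraMap] at hPx hPy
  have hheight (j : ℕ) : |(P.coeff j : ℝ)| ≤ Q := by
    have := hcoeff j
    rw [coeff_map, eq_intCast] at this
    linarith [mul_le_of_le_one_left hQ.le hδ']
  by_contra hP0
  rcases hgen P hP0 (Nat.lt_succ_iff.1 ((natDegree_lt_iff_degree_lt hP0).2 hP)) hheight
    (hPx.trans_le (mul_le_of_le_one_left hq₁.le (by linarith)))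
    (hPy.trans_le (mul_le_of_le_one_left hq₂.le (by linarith))) with h | h <;>
  linarith

theorem exists_monic_irreducible_abs_sub_le (hx : |x| ≤ 1 / 2) (hy : |y| ≤ 1 / 2)
    (hq₁ : 0 < q₁) (hq₁' : q₁ ≤ 1) (hq₂ : 0 < q₂) (hq₂' : q₂ ≤ 1) (hQ : 0 < Q)
    (hQxy : 2 ≤ Q * |x - y|) (hr : 0 < r) (hR₀ : 0 < R)
    (hmin : ∀ P : ℤ[X], P.degree < ↑(m + 2) →
      ‖boxMap m x y q₁ q₂ Q (P.map (algebraMap ℤ ℝ))‖ < r → P = 0)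
    (hR : |x - y| / (q₁ * q₂ * Q ^ m) < r ^ (m + 1) * R)
    {T : ℝ[X]} (hT : T.Monic) (hTm : T.natDegree = m + 2) :
    ∃ F : ℤ[X], F.Monic ∧ F.natDegree = m + 2 ∧ Irreducible (F.map (algebraMap ℤ ℚ)) ∧
      (∀ j, |(F.map (algebraMap ℤ ℝ) - T).coeff j| ≤ 10 * ((m + 2) * R) * Q) ∧
      |(F.map (algebraMap ℤ ℝ) - T).eval x| ≤ 2 * ((m + 2) * R) * q₁ ∧
      |(F.map (algebraMap ℤ ℝ) - T).eval y| ≤ 2 * ((m + 2) * R) * q₂ ∧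
      |(F.map (algebraMap ℤ ℝ) - T).derivative.eval x| ≤ 18 * ((m + 2) * R) * Q ∧
      |(F.map (algebraMap ℤ ℝ) - T).derivative.eval y| ≤ 18 * ((m + 2) * R) * Q := by
  have hxy : x ≠ y := fun h ↦ by norm_num [h] at hQxy
  obtain ⟨F, hF, hFm, hFirr, hFT⟩ := exists_monic_irreducible_seminorm_sub_le (by omega)
    (fun P hP ↦ hP.1) (span_lifts_inter_degreeLT_norm_boxMap_lt hxy hq₁ hq₂ hQ hr hmin hR) hT hTm
  have hbound (f : ℝ[X] →ₗ[ℝ] ℝ) {B B' : ℝ} (hB' : 2 * (m + 2) * B = B')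
      (hf : ∀ P ∈ degreeLT ℝ (m + 2), ‖boxMap m x y q₁ q₂ Q P‖ < R → |f P| ≤ B) :
      |f (F.map (algebraMap ℤ ℝ) - T)| ≤ B' := by
    have := hFT f.toSeminorm B fun P hP ↦ hf P hP.2.1 hP.2.2
    push_cast at this
    exact this.trans_eq hB'
  have hbox {P : ℝ[X]} (hP : P ∈ degreeLT ℝ (m + 2)) :=
    abs_coeff_le_and_abs_eval_derivative_le_of_norm_boxMap_lt hx hy hq₁ hq₁' hq₂ hq₂' hQ hQxy hR₀ hP
  have hiff {P : ℝ[X]} := norm_boxMap_lt_iff (m := m) (x := x) (y := y) (P := P) hq₁ hq₂ hQ hR₀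
  refine ⟨F, hF, hFm, hFirr, fun j ↦ ?_, ?_, ?_, ?_, ?_⟩
  · exact hbound (lcoeff ℝ j) (by ring) fun P hP h ↦ (hbox hP h).1 j
  · exact hbound (leval x) (by ring) fun P _ h ↦ (hiff.1 h).1.le
  · exact hbound (leval y) (by ring) fun P _ h ↦ (hiff.1 h).2.1.le
  · exact hbound (leval x ∘ₗ derivative) (by ring) fun P hP h ↦ (hbox hP h).2.1
  · exact hbound (leval y ∘ₗ derivative) (by ring) fun P hP h ↦ (hbox hP h).2.2

theorem exists_isRoot_abs_sub_le_four_mul_div {F : ℝ[X]} {A H q : ℝ} (hH : ∀ j, |F.coeff j| ≤ H)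
    (hx : |x| ≤ 1 / 2) (hq : 0 ≤ q) (hq' : q ≤ 1) (hQ : 16 ≤ Q) (hHA : 1024 * H ≤ A * Q ^ 2)
    (hFx : |F.eval x| ≤ 2 * A * q) (hF'x : A * Q ≤ |F.derivative.eval x|) :
    ∃ α, F.IsRoot α ∧ |x - α| ≤ 4 * q / Q := by
  have hQ₀ : 0 < Q := by linarith
  have hH₀ : 0 ≤ H := (abs_nonneg _).trans (hH 0)
  refine exists_isRoot_abs_sub_le hH hx (by positivity) ?_ ?_
  · rw [div_le_iff₀ hQ₀]
    linarith
  · calc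
      |F.eval x| + 128 * H * (4 * q / Q) ^ 2
        = |F.eval x| + 1024 * H * q * (2 * q / Q ^ 2) := by ring
      _ ≤ 2 * A * q + A * Q ^ 2 * 1 * (2 * q / Q ^ 2) := by
        have : 0 ≤ A * Q ^ 2 := by linarith
        gcongr
      _ = A * Q * (4 * q / Q) := by
        field_simp
        ring
      _ ≤ |F.derivative.eval x| * (4 * q / Q) := by gcongr

theorem abs_coeff_le_and_exists_isRoot_of_abs_sub_le (hx : |x| ≤ 1 / 2)
    (hy : |y| ≤ 1 / 2) {q A B : ℝ} (hq : 0 ≤ q) (hq' : q ≤ 1) (hQ : 0 < Q)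
    (hQxy : 32000 ≤ Q * |x - y|) (hB : 1 ≤ B) (hAB : A * Q = B * |x - y|) {F T : ℝ[X]}
    (hT : T = (X - C x) * (X - C y) * (X ^ m + C (20 * B)))
    (hcoeff : ∀ j, |(F - T).coeff j| ≤ 10 * A * Q) (heval : |(F - T).eval x| ≤ 2 * A * q)
    (hderiv : |(F - T).derivative.eval x| ≤ 18 * A * Q) :
    (∀ j, |F.coeff j| ≤ 31 * B) ∧ ∃ α, F.IsRoot α ∧ |x - α| ≤ 4 * q / Q := by
  have hxy₁ : |x - y| ≤ 1 := (abs_sub x y).trans (by linarith)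
  have hQ₁ : Q * |x - y| ≤ Q := mul_le_of_le_one_right hQ.le hxy₁
  have hABB : A * Q ≤ B := hAB.trans_le (mul_le_of_le_one_right (by linarith) hxy₁)
  have hFcoeff (j : ℕ) : |F.coeff j| ≤ 31 * B := by
    have hTj : |T.coeff j| ≤ 1 * (1 + |20 * B|) := by
      rw [hT]
      exact norm_coeff_mul_X_pow_add_C_le (R := ℝ)
        (abs_coeff_X_sub_C_mul_X_sub_C_le_one hx hy) m _ j
    have hFTj := hcoeff j
    rw [abs_of_nonneg (by linarith : 0 ≤ 20 * B)] at hTj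
    rw [coeff_sub] at hFTj
    linarith [abs_sub_abs_le_abs_sub (F.coeff j) (T.coeff j)]
  refine ⟨hFcoeff,
    exists_isRoot_abs_sub_le_four_mul_div (A := A) hFcoeff hx hq hq' (by linarith) ?_ ?_ ?_⟩
  · calc
      1024 * (31 * B) ≤ B * 32000 := by linarith
      _ ≤ B * (Q * |x - y|) := by gcongr
      _ = A * Q ^ 2 := by linear_combination -Q * hAB
  · simpa [hT] using heval
  · have hT' := mul_sub_one_le_abs_eval_derivative (x := x) (by linarith) y (20 * B) m
    rw [← hT] at hT'
    rw [derivative_sub, eval_sub, abs_sub_comm] at hderiv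
    have := abs_sub_abs_le_abs_sub (T.derivative.eval x) (F.derivative.eval x)
    linarith [mul_le_mul_of_nonneg_right hB (abs_nonneg (x - y))]

theorem exists_algebraic_integer_point_near_of_large_derivative (hm : m ≠ 0)
    (hx : |x| ≤ 1 / 2) (hy : |y| ≤ 1 / 2) (hq₁ : 0 < q₁) (hq₁' : q₁ ≤ 1) (hq₂ : 0 < q₂)
    (hq₂' : q₂ ≤ 1) (hQ : 0 < Q) (hQxy : 32000 ≤ Q * |x - y|) (hq : q₁ * q₂ * Q ^ m = 1) {δ : ℝ}
    (hδ : 0 < δ) (hδ' : δ ≤ 1)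
    (hgen : ∀ P : ℤ[X], P ≠ 0 → P.natDegree ≤ m + 1 → (∀ j, (|P.coeff j| : ℝ) ≤ Q) →
      |aeval x P| < q₁ → |aeval y P| < q₂ →
      δ * Q ≤ |aeval x (derivative P)| ∨ δ * Q ≤ |aeval y (derivative P)|) :
    ∃ F : ℤ[X], F.Monic ∧ F.natDegree = m + 2 ∧ Irreducible (F.map (algebraMap ℤ ℚ)) ∧
      (∀ j, (|F.coeff j| : ℝ) ≤ 31 * ((m + 2) * 10 ^ (m + 2) * (δ ^ (m + 1))⁻¹ * Q)) ∧
      (∃ α : ℝ, aeval α F = 0 ∧ |x - α| ≤ 4 * q₁ / Q) ∧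
      ∃ β : ℝ, aeval β F = 0 ∧ |y - β| ≤ 4 * q₂ / Q := by
  set B : ℝ := (m + 2) * 10 ^ (m + 2) * (δ ^ (m + 1))⁻¹ * Q
  set R : ℝ := 10 ^ (m + 2) * (δ ^ (m + 1))⁻¹ * |x - y|
  have hxy₀ : 0 < |x - y| := pos_of_mul_pos_right (by linarith) hQ.le
  have hxy₁ : |x - y| ≤ 1 := (abs_sub x y).trans (by linarith)
  have hQ₁ : 1 ≤ Q := by linarith [mul_le_of_le_one_right hQ.le hxy₁]
  have hδm : 1 ≤ (δ ^ (m + 1))⁻¹ := (one_le_inv₀ (by positivity)).2 (pow_le_one₀ hδ.le hδ')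
  have hm₂ : (1 : ℝ) ≤ m + 2 := by linarith [m.cast_nonneg (α := ℝ)]
  have hB : 1 ≤ B := one_le_mul_of_one_le_of_one_le (one_le_mul_of_one_le_of_one_le
    (one_le_mul_of_one_le_of_one_le hm₂ (one_le_pow₀ (by norm_num))) hδm) hQ₁
  have hAB : (m + 2) * R * Q = B * |x - y| := by ring
  have hR : |x - y| / (q₁ * q₂ * Q ^ m) < (δ / 10) ^ (m + 1) * R := by
    have : (δ / 10) ^ (m + 1) * R = 10 * |x - y| := by
      simp only [R]
      rw [div_pow, pow_succ 10 (m + 1)]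
      field_simp
    rw [hq, this]
    linarith
  obtain ⟨hT, hTm⟩ := monic_and_natDegree_eq_X_sub_C_mul_X_sub_C_mul_X_pow_add_C hm x y (20 * B)
  obtain ⟨F, hF, hFm, hFirr, hcoeff, hFx, hFy, hF'x, hF'y⟩ := exists_monic_irreducible_abs_sub_le
    hx hy hq₁ hq₁' hq₂ hq₂' hQ (by linarith) (by positivity) (by positivity) (fun P ↦
      eq_zero_of_norm_boxMap_lt_of_large_derivative hx hy hq₁ hq₁' hq₂ hq₂' hQ (by linarith) hδ hδ'
        hgen) hR hT hTm
  obtain ⟨hbound, α, hα, hxα⟩ := abs_coeff_le_and_exists_isRoot_of_abs_sub_le hx hy hq₁.le hq₁'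
    hQ hQxy hB hAB rfl hcoeff hFx hF'x
  rw [abs_sub_comm] at hQxy hAB
  obtain ⟨-, β, hβ, hyβ⟩ := abs_coeff_le_and_exists_isRoot_of_abs_sub_le hy hx hq₂.le hq₂'
    hQ hQxy hB hAB (by rw [mul_comm (X - C x)]) hcoeff hFy hF'y
  rw [IsRoot, eval_map_algebraMap] at hα hβ
  refine ⟨F, hF, hFm, hFirr, fun j ↦ ?_, ⟨α, hα, hxα⟩, β, hβ, hyβ⟩
  have := hbound j
  rwa [coeff_map, eq_intCast] at this

end Approximation

theorem ten_pow_le_three_mul_factorial (n : ℕ) : 10 ^ n ≤ 3 * (n + 3).factorial := by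
  rcases lt_or_ge n 6 with hn | hn
  · interval_cases n <;> decide
  · induction n, hn using Nat.le_induction with
    | base => decide
    | succ n hn ih =>
      rw [pow_succ, Nat.add_right_comm, Nat.factorial_succ]
      nlinarith [(n + 3).factorial_pos]

theorem rpow_neg_mul_rpow_neg_mul_pow_eq_one {Q u₁ u₂ : ℝ} (hQ : 0 < Q) {m : ℕ}
    (hu : u₁ + u₂ = m) : Q ^ (-u₁) * Q ^ (-u₂) * Q ^ m = 1 := by
  rw [← Real.rpow_natCast, ← Real.rpow_add hQ, ← Real.rpow_add hQ,
    show -u₁ + -u₂ + m = 0 by linarith, Real.rpow_zero]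

theorem exists_algebraic_integer_point_near_generic_point_general (n : ℕ) (hn : 3 ≤ n)
    (u₁ u₂ : ℝ) (hu₁ : 0 ≤ u₁) (hu₂ : 0 ≤ u₂) (hu : u₁ + u₂ = (n : ℝ) - 2)
    (δ₀ : ℝ) (hδ₀ : 0 < δ₀) (hδ₀' : δ₀ ≤ 1) (Q x₀ y₀ : ℝ) (hx₀ : |x₀| ≤ 1 / 2) (hy₀ : |y₀| ≤ 1 / 2)
    (hQ : 32000 ≤ Q * |x₀ - y₀|)
    (hgen : ∀ P : ℤ[X], P ≠ 0 → P.natDegree ≤ n - 1 → (∀ j, (|P.coeff j| : ℝ) ≤ Q) →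
      |aeval x₀ P| < Q ^ (-u₁) → |aeval y₀ P| < Q ^ (-u₂) →
      δ₀ * Q ≤ |aeval x₀ (derivative P)| ∨ δ₀ * Q ≤ |aeval y₀ (derivative P)|) :
    ∃ P : ℤ[X], P.Monic ∧ P.natDegree = n ∧ Irreducible (P.map (algebraMap ℤ ℚ)) ∧
      (∀ j, (|P.coeff j| : ℝ) <
        2 * 10 ^ 4 * (Nat.factorial (n + 4) : ℝ) * (δ₀ ^ (n - 1))⁻¹ * Q) ∧
      ∃ α β : ℝ, aeval α P = 0 ∧ aeval β P = 0 ∧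
        |x₀ - α| < (n : ℝ) * (2 * n + 1) * (δ₀ ^ (n - 1))⁻¹ * Q ^ (-u₁ - 1) ∧
        |y₀ - β| < (n : ℝ) * (2 * n + 1) * (δ₀ ^ (n - 1))⁻¹ * Q ^ (-u₂ - 1) := by
  obtain ⟨m, rfl⟩ := Nat.exists_eq_add_of_le' (show 2 ≤ n by omega)
  have hQ₀ : 0 < Q := pos_of_mul_pos_left (by linarith) (abs_nonneg (x₀ - y₀))
  have hQ₁ : 1 ≤ Q := by
    linarith [mul_le_of_le_one_right hQ₀.le ((abs_sub x₀ y₀).trans (by linarith : _ ≤ (1 : ℝ)))]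
  have hq (u : ℝ) (hu : 0 ≤ u) : Q ^ (-u) ≤ 1 := Real.rpow_le_one_of_one_le_of_nonpos hQ₁ (by simpa)
  push_cast at hu ⊢
  obtain ⟨F, hF, hFm, hFirr, hbound, ⟨α, hα, hxα⟩, β, hβ, hyβ⟩ :=
    exists_algebraic_integer_point_near_of_large_derivative (by omega) hx₀ hy₀
      (Real.rpow_pos_of_pos hQ₀ _) (hq u₁ hu₁) (Real.rpow_pos_of_pos hQ₀ _) (hq u₂ hu₂) hQ₀ hQ
      (rpow_neg_mul_rpow_neg_mul_pow_eq_one (m := m) hQ₀ (by linarith)) hδ₀ hδ₀' hgen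
  have hδ₁ : 1 ≤ (δ₀ ^ (m + 1))⁻¹ :=
    (one_le_inv₀ (by positivity)).2 (pow_le_one₀ hδ₀.le hδ₀')
  have hroot (u : ℝ) : 4 * Q ^ (-u) / Q <
      (m + 2) * (2 * (m + 2) + 1) * (δ₀ ^ (m + 1))⁻¹ * Q ^ (-u - 1) := by
    rw [Real.rpow_sub_one hQ₀.ne', mul_div_assoc]
    gcongr
    exact lt_of_lt_of_le (by nlinarith [m.cast_nonneg (α := ℝ)])
      (le_mul_of_one_le_right (by positivity) hδ₁)
  have hfact : 31 * ((m + 2) * 10 ^ (m + 2)) < 2 * 10 ^ 4 * ((m + 2 + 4).factorial : ℝ) := by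
    have := ten_pow_le_three_mul_factorial (m + 2)
    rw [Nat.factorial_succ]
    norm_cast
    nlinarith [(m + 2 + 3).factorial_pos]
  refine ⟨F, hF, hFm, hFirr, fun j ↦ (hbound j).trans_lt ?_, α, β, hα, hβ,
    hxα.trans_lt (hroot u₁), hyβ.trans_lt (hroot u₂)⟩
  calc
    31 * ((m + 2) * 10 ^ (m + 2) * (δ₀ ^ (m + 1))⁻¹ * Q)
      = 31 * ((m + 2) * 10 ^ (m + 2)) * (δ₀ ^ (m + 1))⁻¹ * Q := by ring
    _ < 2 * 10 ^ 4 * (m + 2 + 4).factorial * (δ₀ ^ (m + 1))⁻¹ * Q := by gcongr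

/-- For `n ≥ 4`, `ε > 0`, `u₁, u₂ > 0` with `u₁ + u₂ = n - 2`, `0 < δ₀ < 1`, and all
sufficiently large integers `Q`: if `(x₀, y₀) ∈ [-1/2, 1/2]²` with `|x₀ - y₀| > ε` is such
that every nonzero `P ∈ ℤ[t]` of degree at most `n - 1` and height at most `Q` with
`|P(x₀)| < Q^{-u₁}` and `|P(y₀)| < Q^{-u₂}` satisfies `|P'(x₀)| ≥ δ₀·Q` and
`|P'(y₀)| ≥ δ₀·Q`, then there exists a monic irreducible (over `ℚ`) integer polynomial `P`
of degree `n` with `H(P) < 2·10⁴·(n+4)!·δ₀^{-(n-1)}·Q` having real roots `α`, `β` with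
`|x₀ - α| < n·(2n+1)·δ₀^{-(n-1)}·Q^{-u₁-1}` and `|y₀ - β| < n·(2n+1)·δ₀^{-(n-1)}·Q^{-u₂-1}`. -/
theorem exists_algebraic_integer_point_near_generic_point (n : ℕ) (hn : 4 ≤ n)
    (ε : ℝ) (hε : 0 < ε)
    (u₁ u₂ : ℝ) (hu₁ : 0 < u₁) (hu₂ : 0 < u₂) (hu : u₁ + u₂ = (n : ℝ) - 2)
    (δ₀ : ℝ) (hδ₀ : 0 < δ₀) (hδ₀' : δ₀ < 1) :
    ∃ Q₀ : ℕ, ∀ Q : ℕ, Q₀ < Q →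
      ∀ x₀ y₀ : ℝ, x₀ ∈ Set.Icc (-(1/2) : ℝ) (1/2) →
        y₀ ∈ Set.Icc (-(1/2) : ℝ) (1/2) → ε < |x₀ - y₀| →
        (∀ P : ℤ[X], P ≠ 0 → P.natDegree ≤ n - 1 →
          (∀ j, |P.coeff j| ≤ (Q : ℤ)) →
          |Polynomial.aeval x₀ P| < (Q : ℝ) ^ (-u₁) →
          |Polynomial.aeval y₀ P| < (Q : ℝ) ^ (-u₂) →
          δ₀ * (Q : ℝ) ≤ |Polynomial.aeval x₀ (derivative P)| ∧
            δ₀ * (Q : ℝ) ≤ |Polynomial.aeval y₀ (derivative P)|) →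
        ∃ P : ℤ[X], P.Monic ∧ P.natDegree = n ∧
          Irreducible (P.map (algebraMap ℤ ℚ)) ∧
          (∀ j, (|P.coeff j| : ℝ) <
            2 * 10 ^ 4 * (Nat.factorial (n + 4) : ℝ) * (δ₀ ^ (n - 1))⁻¹ * (Q : ℝ)) ∧
          ∃ α β : ℝ, Polynomial.aeval α P = 0 ∧ Polynomial.aeval β P = 0 ∧
            |x₀ - α| < (n : ℝ) * (2 * n + 1) * (δ₀ ^ (n - 1))⁻¹ * (Q : ℝ) ^ (-u₁ - 1) ∧
            |y₀ - β| < (n : ℝ) * (2 * n + 1) * (δ₀ ^ (n - 1))⁻¹ * (Q : ℝ) ^ (-u₂ - 1) := by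
  refine ⟨⌈32000 / ε⌉₊, fun Q hQ x₀ y₀ hx₀ hy₀ hxy hgen ↦ ?_⟩
  have hQ' : 32000 ≤ Q * |x₀ - y₀| := by
    have := (div_lt_iff₀ hε).1 (Nat.lt_of_ceil_lt hQ)
    nlinarith [Q.cast_nonneg (α := ℝ)]
  exact exists_algebraic_integer_point_near_generic_point_general n (by omega) u₁ u₂ hu₁.le hu₂.le
    hu δ₀ hδ₀ hδ₀'.le Q x₀ y₀ (abs_le.2 hx₀) (abs_le.2 hy₀) hQ' fun P hP hPn hPQ hPx hPy ↦
      .inl (hgen P hP hPn (fun j ↦ by exact_mod_cast hPQ j) hPx hPy).1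
end
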